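/- Two-sided Gaussian-type bound for a Dirichlet weighted sum: Let m ≥ 1, b > 0, and let f : {0,…,m} → [0,b] satisfy f(0) = 0 and f(m) = b. Let α = (α_0,…,α_m) ∈ ℝ_{>0}^{m+1} and set ᾱ = Σ_{i=0}^m α_i. Define p̄⁺, p̄⁻ ∈ Δ_m by p̄⁺(ℓ) = α_ℓ/(ᾱ−1) for ℓ < m, p̄⁺(m) = (α_m − 1)/(ᾱ−1), and p̄⁻(ℓ) = α_ℓ/(ᾱ−1) for ℓ > 0, p̄⁻(0) = (α_0 − 1)/(ᾱ−1). Fix ε ∈ (0,1) and assume min(α_0, α_m) ≥ c₀·ε^{−2} + 1. Then for every μ ∈ (0, b), for w ∼ Dir(α) and ζ ∼ N(0,1): (1 − ε)·P( ζ ≥ √(ᾱ−1)·A(p̄⁺, μ, f) ) ≤ P( wf ≥ μ ) ≤ (1 + ε)·P( ζ ≥ √(ᾱ−1)·A(p̄⁻, μ, f) ). -/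

import Mathlib

open MeasureTheory ProbabilityTheory Real Set
open scoped ENNReal

noncomputable section

/-- The absolute constant `c₀ = (2/π)(8 + 49√6/9)²`. -/
def c0 : ℝ := (2 / Real.pi) * (8 + 49 * Real.sqrt 6 / 9) ^ 2

/-- Unnormalized density of `Dir(α)` in the first `m` coordinates. -/
def dirichletDensity (m : ℕ) (α : Fin (m + 1) → ℝ) : (Fin m → ℝ) → ℝ :=
  Set.indicator {x | (∀ i, 0 ≤ x i) ∧ ∑ i, x i ≤ 1}
    (fun x => (∏ i : Fin m, x i ^ (α i.castSucc - 1)) * (1 - ∑ i, x i) ^ (α (Fin.last m) - 1))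

def dirichletBase (m : ℕ) (α : Fin (m + 1) → ℝ) : Measure (Fin m → ℝ) :=
  volume.withDensity fun x => ENNReal.ofReal (dirichletDensity m α x)

/-- The Dirichlet distribution `Dir(α)`, as the law of the vector
`(x₀, …, x_{m-1}, 1 - ∑ x_i)` on the simplex `Δ_m ⊆ ℝ^{m+1}`. -/
def dirichlet (m : ℕ) (α : Fin (m + 1) → ℝ) : Measure (Fin (m + 1) → ℝ) :=
  Measure.map (fun x : Fin m → ℝ => Fin.snoc x (1 - ∑ i, x i))
    ((dirichletBase m α Set.univ)⁻¹ • dirichletBase m α)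

/-- Kullback–Leibler divergence between finitely supported `p, q` (for `p ≪ q`). -/
def klReal {m : ℕ} (p q : Fin (m + 1) → ℝ) : ℝ :=
  ∑ i, if p i = 0 then 0 else p i * Real.log (p i / q i)

/-- `Kinf(p, μ, f) = inf { KL(p,q) : q ∈ Δ_m, qf ≥ μ }`. -/
def Kinf {m : ℕ} (p : Fin (m + 1) → ℝ) (μ : ℝ) (f : Fin (m + 1) → ℝ) : ℝ :=
  sInf {x | ∃ q ∈ stdSimplex ℝ (Fin (m + 1)),
    (∀ i, q i = 0 → p i = 0) ∧ μ ≤ ∑ i, f i * q i ∧ x = klReal p q}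

/-- `Kinf*(p, μ, f) = inf { KL(p,q) : q ∈ Δ_m, qf = μ }`. -/
def Kinfstar {m : ℕ} (p : Fin (m + 1) → ℝ) (μ : ℝ) (f : Fin (m + 1) → ℝ) : ℝ :=
  sInf {x | ∃ q ∈ stdSimplex ℝ (Fin (m + 1)),
    (∀ i, q i = 0 → p i = 0) ∧ (∑ i, f i * q i) = μ ∧ x = klReal p q}

/-- `A(p, μ, f) = sgn(μ - pf) √(2 Kinf*(p, μ, f))`. -/
def Afun {m : ℕ} (p : Fin (m + 1) → ℝ) (μ : ℝ) (f : Fin (m + 1) → ℝ) : ℝ :=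
  Real.sign (μ - ∑ ℓ, f ℓ * p ℓ) * Real.sqrt (2 * Kinfstar p μ f)

/-!
A Dirichlet vector is a vector of independent Gamma variables divided by its sum, so for
`w ∼ Dir(α)` the density of `wf` at `u` is `ᾱ - 1` times the density at zero of a weighted sum of
independent Gamma variables. Fourier inversion along a vertical line through the saddlepoint, which
is the maximiser `l` of the dual formula for `Kinfstar p u f`, turns the latter into an integral
over `ℝ` of `∏ (1 + a_j² s²)^(-β_j/2)` times the cosine of a small phase; Laplace's method compares
it with the Gaussian integral of the same variance, with relative error `O(1 / min(α₀, α_m))`. On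
the other side, `-d/du P(ζ ≥ √n · A(p, u, f))` is the same saddlepoint expression up to a factor
that lies on the correct side of one according to which of the two endpoint parameters was shifted.
Integrating over `u ∈ (μ, b)` gives both bounds for levels `μ` above the mean, and the reflection
`f ↦ b - f` exchanges them for levels below it.
-/

namespace DirichletCrossing

open Filter Topology
open scoped NNReal Nat

/-! ### Gamma laws -/

section GammaLaw

variable {a r t : ℝ}

lemma exp_mul_gammaPDFReal (hr : 0 < r) (ht : t < r) (x : ℝ) :
    exp (t * x) * gammaPDFReal a r x = (1 - t / r) ^ (-a) * gammaPDFReal a (r - t) x := by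
  have hrt : 0 < 1 - t / r := by rw [sub_pos, div_lt_one hr]; exact ht
  have hrate : r - t = r * (1 - t / r) := by field_simp
  have hpow : (1 - t / r) ^ (-a) * (r - t) ^ a = r ^ a := by
    rw [hrate, mul_rpow hr.le hrt.le, mul_left_comm, ← rpow_add hrt, neg_add_cancel, rpow_zero,
      mul_one]
  have hexp : exp (t * x) * exp (-(r * x)) = exp (-((r - t) * x)) := by
    rw [← exp_add]; ring_nf
  simp only [gammaPDFReal]
  split_ifs
  · rw [← hpow, ← hexp]; ring
  · simp

lemma lintegral_exp_mul_gammaMeasure (ha : 0 < a) (hr : 0 < r) (ht : t < r) :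
    ∫⁻ x, ENNReal.ofReal (exp (t * x)) ∂gammaMeasure a r
      = ENNReal.ofReal ((1 - t / r) ^ (-a)) := by
  have hrt : 0 ≤ 1 - t / r := by rw [sub_nonneg, div_le_one hr]; exact ht.le
  have hmeas : ∀ q, Measurable (gammaPDF a q) := fun q =>
    (measurable_gammaPDFReal a q).ennreal_ofReal
  calc ∫⁻ x, ENNReal.ofReal (exp (t * x)) ∂gammaMeasure a r
      = ∫⁻ x, ENNReal.ofReal ((1 - t / r) ^ (-a)) * gammaPDF a (r - t) x := by
        rw [gammaMeasure, lintegral_withDensity_eq_lintegral_mul _ (hmeas r) (by fun_prop)]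
        refine lintegral_congr fun x => ?_
        rw [Pi.mul_apply, gammaPDF, gammaPDF, mul_comm, ← ENNReal.ofReal_mul (exp_pos _).le,
          ← ENNReal.ofReal_mul (rpow_nonneg hrt _), exp_mul_gammaPDFReal hr ht]
    _ = ENNReal.ofReal ((1 - t / r) ^ (-a)) := by
        rw [lintegral_const_mul _ (hmeas _), lintegral_gammaPDF_eq_one ha (sub_pos.2 ht), mul_one]

lemma integrable_exp_mul_gammaMeasure (ha : 0 < a) (hr : 0 < r) (ht : t < r) :
    Integrable (fun x => exp (t * x)) (gammaMeasure a r) := by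
  refine ⟨by fun_prop, (hasFiniteIntegral_iff_ofReal (.of_forall fun x => (exp_pos _).le)).2 ?_⟩
  rw [lintegral_exp_mul_gammaMeasure ha hr ht]
  exact ENNReal.ofReal_lt_top

lemma mgf_id_gammaMeasure (ha : 0 < a) (hr : 0 < r) (ht : t < r) :
    mgf id (gammaMeasure a r) t = (1 - t / r) ^ (-a) := by
  have hrt : 0 ≤ 1 - t / r := by rw [sub_nonneg, div_le_one hr]; exact ht.le
  simp only [mgf, id_eq]
  rw [integral_eq_lintegral_of_nonneg_ae (.of_forall fun x => (exp_pos _).le) (by fun_prop),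
    lintegral_exp_mul_gammaMeasure ha hr ht, ENNReal.toReal_ofReal (rpow_nonneg hrt _)]

lemma eqOn_halfPlane_of_eventually_ofReal {F G : ℂ → ℂ} (hr : 0 < r)
    (hF : AnalyticOnNhd ℂ F {z | z.re < r}) (hG : AnalyticOnNhd ℂ G {z | z.re < r})
    (hFG : ∀ᶠ x : ℝ in 𝓝 0, F x = G x) : EqOn F G {z | z.re < r} := by
  have hofReal : Tendsto ((↑) : ℝ → ℂ) (𝓝[≠] 0) (𝓝[≠] 0) :=
    tendsto_nhdsWithin_of_tendsto_nhds_of_eventually_within _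
      ((Complex.continuous_ofReal.tendsto' 0 0 Complex.ofReal_zero).mono_left nhdsWithin_le_nhds)
      (eventually_mem_nhdsWithin.mono fun x hx => Complex.ofReal_ne_zero.2 hx)
  exact hF.eqOn_of_preconnected_of_frequently_eq hG (convex_halfSpace_re_lt r).isPreconnected
    (by simpa using hr) (hofReal.frequently (hFG.filter_mono nhdsWithin_le_nhds).frequently)

lemma complexMGF_id_gammaMeasure (ha : 0 < a) (hr : 0 < r) {z : ℂ} (hz : z.re < r) :
    complexMGF id (gammaMeasure a r) z = (1 - z / r) ^ (-(a : ℂ)) := by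
  have hdom : Iio r ⊆ interior (integrableExpSet id (gammaMeasure a r)) :=
    interior_maximal (fun t ht => integrable_exp_mul_gammaMeasure ha hr ht) isOpen_Iio
  refine eqOn_halfPlane_of_eventually_ofReal (G := fun w => (1 - w / r) ^ (-(a : ℂ))) hr
    (analyticOnNhd_complexMGF.mono fun z hz => hdom hz) ?_ ?_ hz
  · refine DifferentiableOn.analyticOnNhd (fun w hw => ?_)
      (isOpen_lt Complex.continuous_re continuous_const)
    have hslit : 1 - w / r ∈ Complex.slitPlane := by
      left
      simpa [Complex.div_ofReal_re, div_lt_one hr] using hw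
    have hdiff : DifferentiableAt ℂ (fun w : ℂ => 1 - w / r) w := by fun_prop
    exact (hdiff.cpow (differentiableAt_const _) hslit).differentiableWithinAt
  · filter_upwards [Iio_mem_nhds hr] with x hx
    have hx' : 0 ≤ 1 - x / r := by rw [sub_nonneg, div_le_one hr]; exact (mem_Iio.1 hx).le
    rw [complexMGF_ofReal, mgf_id_gammaMeasure ha hr hx, Complex.ofReal_cpow hx']
    push_cast
    rfl

end GammaLaw

/-- The law of a vector of independent `Gamma(α j, 1)` variables; normalising the vector by its
sum turns it into `Dir(α)`. -/
def piGamma {ι : Type*} [Fintype ι] (α : ι → ℝ) : Measure (ι → ℝ) :=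
  Measure.pi fun j => gammaMeasure (α j) 1

lemma isProbabilityMeasure_piGamma {ι : Type*} [Fintype ι] {α : ι → ℝ} (hα : ∀ j, 0 < α j) :
    IsProbabilityMeasure (piGamma α) := by
  have (j : ι) := isProbabilityMeasure_gammaMeasure (hα j) one_pos
  unfold piGamma
  infer_instance

lemma integral_prod_cexp_piGamma {ι : Type*} [Fintype ι] {α : ι → ℝ} (hα : ∀ j, 0 < α j)
    {z : ι → ℂ} (hz : ∀ j, (z j).re < 1) :
    ∫ x, ∏ j, Complex.exp (z j * x j) ∂piGamma α = ∏ j, (1 - z j) ^ (-(α j : ℂ)) := by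
  have (j : ι) := isProbabilityMeasure_gammaMeasure (hα j) one_pos
  rw [piGamma, integral_fintype_prod_eq_prod (fun j (y : ℝ) => Complex.exp (z j * y))]
  refine Finset.prod_congr rfl fun j _ => ?_
  simpa only [complexMGF, id_eq, Complex.ofReal_one, div_one] using
    complexMGF_id_gammaMeasure (hα j) one_pos (hz j)

/-- The density at `0` of `∑ j, c j * X j + ζ`, where `X` has law `piGamma α` and `ζ` is an
independent centred Gaussian variable of variance `v`. -/
def smoothedDensity {ι : Type*} [Fintype ι] (α c : ι → ℝ) (v : ℝ≥0) : ℝ :=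
  ∫ x, gaussianPDFReal 0 v (∑ j, c j * x j) ∂piGamma α

/-! ### The density at zero of a weighted sum of Gamma variables -/

section FourierInversion

variable {ι : Type*} [Fintype ι] {α c : ι → ℝ} {l : ℝ} {v : ℝ≥0}

/-- The line of integration may be any vertical line `Re z = l`; the saddle point is chosen
later. -/
lemma gaussianPDFReal_eq_integral_cexp (hv : v ≠ 0) (l x : ℝ) :
    (gaussianPDFReal 0 v x : ℂ) = (2 * π)⁻¹ *
      ∫ s : ℝ, Complex.exp (v / 2 * (l + Complex.I * s) ^ 2 + (l + Complex.I * s) * x) := by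
  have hv0 : (0 : ℝ) < v := NNReal.coe_pos.2 (pos_iff_ne_zero.2 hv)
  have hv' : (v : ℂ) ≠ 0 := by exact_mod_cast hv0.ne'
  have hquad (s : ℝ) : (v / 2 * (l + Complex.I * s) ^ 2 + (l + Complex.I * s) * x : ℂ)
      = (-(v / 2) : ℝ) * s ^ 2 + Complex.I * (v * l + x) * s + (v / 2 * l ^ 2 + l * x) := by
    push_cast
    linear_combination (v / 2 * s ^ 2 : ℂ) * Complex.I_sq
  have hexponent : (v / 2 * l ^ 2 + l * x - (Complex.I * (v * l + x)) ^ 2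
      / (4 * (-(v / 2) : ℝ)) : ℂ) = (-(x - 0) ^ 2 / (2 * v) : ℝ) := by
    rw [mul_pow, Complex.I_sq]
    push_cast
    field_simp
    ring
  have hbase : (π / -(-(v / 2) : ℝ) : ℂ) = (2 * π / v : ℝ) := by
    push_cast
    field_simp
  have hsqrt : ((π / -(-(v / 2) : ℝ)) ^ (1 / 2 : ℂ) : ℂ) = (√(2 * π / v) : ℝ) := by
    rw [hbase, sqrt_eq_rpow, Complex.ofReal_cpow (by positivity)]
    norm_num
  have hconst : (√(2 * π * v))⁻¹ = (2 * π)⁻¹ * √(2 * π / v) := by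
    rw [sqrt_mul (by positivity), sqrt_div (by positivity)]
    field_simp
    exact (sq_sqrt (by positivity)).symm
  simp_rw [hquad]
  rw [integral_cexp_quadratic (by rw [Complex.ofReal_re]; linarith), hexponent, hsqrt,
    gaussianPDFReal_def]
  beta_reduce
  rw [hconst]
  push_cast
  ring

lemma norm_cexp_half_mul_sq (v : ℝ≥0) (l s : ℝ) :
    ‖Complex.exp (v / 2 * (l + Complex.I * s) ^ 2)‖ = exp (v / 2 * (l ^ 2 - s ^ 2)) := by
  rw [Complex.norm_exp]
  congr 1
  simp [pow_two]

lemma integrable_cexp_prod_piGamma (hα : ∀ j, 0 < α j) (hl : ∀ j, l * c j < 1) (hv : v ≠ 0) :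
    Integrable (Function.uncurry fun (x : ι → ℝ) (s : ℝ) =>
      Complex.exp (v / 2 * (l + Complex.I * s) ^ 2 + (l + Complex.I * s) * (∑ j, c j * x j : ℝ)))
      ((piGamma α).prod volume) := by
  have (j : ι) := isProbabilityMeasure_gammaMeasure (hα j) one_pos
  have hv0 : (0 : ℝ) < v := NNReal.coe_pos.2 (pos_iff_ne_zero.2 hv)
  have hs : Integrable fun s : ℝ => exp (v / 2 * l ^ 2) * exp (-(v / 2) * s ^ 2) :=
    (integrable_exp_neg_mul_sq (half_pos hv0)).const_mul _
  have hx : Integrable (fun x : ι → ℝ => ∏ j, exp (l * c j * x j)) (piGamma α) :=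
    Integrable.fintype_prod (f := fun j y => exp (l * c j * y))
      fun j => integrable_exp_mul_gammaMeasure (hα j) one_pos (hl j)
  refine (hx.mul_prod hs).mono' (Continuous.aestronglyMeasurable ?_) (.of_forall fun z => ?_)
  · simp only [Function.uncurry_def]
    fun_prop
  · have hre : ((l + Complex.I * z.2) * (∑ j, c j * z.1 j : ℝ) : ℂ).re
        = ∑ j, l * c j * z.1 j := by
      simp [Finset.mul_sum, mul_assoc]
    have hgauss : exp (v / 2 * (l ^ 2 - z.2 ^ 2))
        = exp (v / 2 * l ^ 2) * exp (-(v / 2) * z.2 ^ 2) := by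
      rw [← exp_add]
      ring_nf
    rw [Function.uncurry_apply_pair, Complex.exp_add, norm_mul, norm_cexp_half_mul_sq,
      Complex.norm_exp, hre, exp_sum, hgauss, mul_comm]

lemma smoothedDensity_eq_integral (hα : ∀ j, 0 < α j) (hl : ∀ j, l * c j < 1) (hv : v ≠ 0) :
    (smoothedDensity α c v : ℂ) = (2 * π)⁻¹ *
      ∫ s : ℝ, Complex.exp (v / 2 * (l + Complex.I * s) ^ 2) *
        ∏ j, (1 - (l + Complex.I * s) * c j) ^ (-(α j : ℂ)) := by
  have := isProbabilityMeasure_piGamma hα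
  have hsplit (s : ℝ) (x : ι → ℝ) :
      Complex.exp (v / 2 * (l + Complex.I * s) ^ 2 + (l + Complex.I * s) * (∑ j, c j * x j : ℝ))
        = Complex.exp (v / 2 * (l + Complex.I * s) ^ 2) *
          ∏ j, Complex.exp ((l + Complex.I * s) * c j * x j) := by
    rw [Complex.exp_add, ← Complex.exp_sum]
    push_cast
    simp_rw [Finset.mul_sum, mul_assoc]
  have hfactor (s : ℝ) : ∫ x, ∏ j, Complex.exp ((l + Complex.I * s) * c j * x j) ∂piGamma α
      = ∏ j, (1 - (l + Complex.I * s) * c j) ^ (-(α j : ℂ)) :=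
    integral_prod_cexp_piGamma hα fun j => by simpa using hl j
  rw [smoothedDensity, ← integral_complex_ofReal]
  simp_rw [gaussianPDFReal_eq_integral_cexp hv l]
  rw [integral_const_mul, integral_integral_swap (integrable_cexp_prod_piGamma hα hl hv)]
  simp_rw [hsplit, integral_const_mul, hfactor]

lemma log_one_sub_I_mul (y : ℝ) :
    Complex.log (1 - Complex.I * y)
      = ((1 / 2 * log (1 + y ^ 2) : ℝ) : ℂ) - arctan y * Complex.I := by
  have hnorm : ‖(1 - Complex.I * y : ℂ)‖ = √(1 + y ^ 2) := by
    simp [Complex.norm_eq_sqrt_sq_add_sq]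
  have harg : (1 - Complex.I * y : ℂ).arg = -arctan y := by
    rw [Complex.arg_of_re_nonneg (by simp), hnorm, arctan_eq_arcsin, ← arcsin_neg]
    simp [neg_div]
  rw [Complex.log, hnorm, harg, log_sqrt (by positivity)]
  push_cast
  ring

/-- The characteristic function of `∑ j, a j * X j` for independent `X j ∼ Gamma(α j, 1)`. -/
def gammaChar (α a : ι → ℝ) (s : ℝ) : ℂ := ∏ j, (1 - Complex.I * (s * a j : ℝ)) ^ (-(α j : ℂ))

/-- The modulus of `gammaChar`. -/
def modulus (α a : ι → ℝ) (s : ℝ) : ℝ := exp (-(1 / 2 * ∑ j, α j * log (1 + (s * a j) ^ 2)))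

/-- The (continuous) argument of `gammaChar`. -/
def phase (α a : ι → ℝ) (s : ℝ) : ℝ := ∑ j, α j * arctan (s * a j)

lemma one_sub_I_mul_ne_zero (y : ℝ) : (1 - Complex.I * y : ℂ) ≠ 0 := fun h => by
  simpa using congrArg Complex.re h

lemma gammaChar_eq_polar (α a : ι → ℝ) (s : ℝ) :
    gammaChar α a s = modulus α a s * Complex.exp (phase α a s * Complex.I) := by
  simp_rw [gammaChar, Complex.cpow_def_of_ne_zero (one_sub_I_mul_ne_zero _), log_one_sub_I_mul]
  rw [← Complex.exp_sum, modulus, phase, Complex.ofReal_exp, ← Complex.exp_add]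
  congr 1
  push_cast
  rw [Finset.mul_sum, Finset.sum_mul, ← Finset.sum_neg_distrib, ← Finset.sum_add_distrib]
  exact Finset.sum_congr rfl fun j _ => by ring

lemma modulus_pos (α a : ι → ℝ) (s : ℝ) : 0 < modulus α a s := exp_pos _

lemma norm_gammaChar (α a : ι → ℝ) (s : ℝ) : ‖gammaChar α a s‖ = modulus α a s := by
  rw [gammaChar_eq_polar, norm_mul, Complex.norm_exp_ofReal_mul_I, mul_one,
    Complex.norm_of_nonneg (modulus_pos α a s).le]

lemma re_gammaChar (α a : ι → ℝ) (s : ℝ) :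
    (gammaChar α a s).re = modulus α a s * cos (phase α a s) := by
  rw [gammaChar_eq_polar, Complex.re_ofReal_mul, Complex.exp_ofReal_mul_I_re]

@[fun_prop]
lemma continuous_gammaChar (α a : ι → ℝ) : Continuous (gammaChar α a) := by
  refine continuous_finsetProd _ fun j _ => Continuous.cpow (by fun_prop) (by fun_prop) fun s => ?_
  left
  simp

lemma continuous_modulus (α a : ι → ℝ) : Continuous (modulus α a) := by
  simpa only [funext (norm_gammaChar α a)] using (continuous_gammaChar α a).norm

@[fun_prop]
lemma continuous_phase (α a : ι → ℝ) : Continuous (phase α a) :=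
  continuous_finsetSum _ fun j _ => continuous_const.mul (continuous_arctan.comp (by fun_prop))

lemma integrable_gammaChar_iff {α a : ι → ℝ} :
    Integrable (gammaChar α a) ↔ Integrable (modulus α a) := by
  rw [← integrable_norm_iff (continuous_gammaChar α a).aestronglyMeasurable]
  simp only [norm_gammaChar]

lemma re_integral_gammaChar {α a : ι → ℝ} (h : Integrable (modulus α a)) :
    (∫ s, gammaChar α a s).re = ∫ s, modulus α a s * cos (phase α a s) := by
  simp_rw [← re_gammaChar]
  exact (integral_re (integrable_gammaChar_iff.2 h)).symm

/-- Exponential tilting by `l`: moving the line of integration replaces each weight `c j` by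
`c j / (1 - l * c j)`. -/
lemma prod_cpow_eq_tilt_mul_gammaChar (hl : ∀ j, l * c j < 1) (s : ℝ) :
    ∏ j, (1 - (l + Complex.I * s) * c j) ^ (-(α j : ℂ))
      = ((∏ j, (1 - l * c j) ^ (-α j) : ℝ) : ℂ) *
        gammaChar α (fun j => c j / (1 - l * c j)) s := by
  rw [gammaChar, Complex.ofReal_prod, ← Finset.prod_mul_distrib]
  refine Finset.prod_congr rfl fun j _ => ?_
  have hr : 0 < 1 - l * c j := sub_pos.2 (hl j)
  have hr' : ((1 - l * c j : ℝ) : ℂ) ≠ 0 := by exact_mod_cast hr.ne'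
  have hfactor : (1 - (l + Complex.I * s) * c j : ℂ)
      = (1 - l * c j : ℝ) * (1 - Complex.I * (s * (c j / (1 - l * c j)) : ℝ)) := by
    push_cast at hr' ⊢
    field_simp
    ring
  rw [hfactor, Complex.cpow_def_of_ne_zero (mul_ne_zero hr' (one_sub_I_mul_ne_zero _)),
    Complex.log_ofReal_mul hr (one_sub_I_mul_ne_zero _), Complex.ofReal_cpow hr.le,
    Complex.cpow_def_of_ne_zero hr', Complex.cpow_def_of_ne_zero (one_sub_I_mul_ne_zero _),
    ← Complex.ofReal_log hr.le, ← Complex.exp_add, add_mul]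
  push_cast
  rfl

lemma tendsto_smoothedDensity (hα : ∀ j, 0 < α j) (hl : ∀ j, l * c j < 1)
    (hint : Integrable (modulus α fun j => c j / (1 - l * c j))) :
    Tendsto (smoothedDensity α c) (𝓝[>] 0)
      (𝓝 ((2 * π)⁻¹ * ((∏ j, (1 - l * c j) ^ (-α j)) *
        ∫ s, modulus α (fun j => c j / (1 - l * c j)) s *
          cos (phase α (fun j => c j / (1 - l * c j)) s)))) := by
  set a := fun j => c j / (1 - l * c j)
  have hlim : Tendsto (fun v : ℝ≥0 => ∫ s : ℝ,
      Complex.exp (v / 2 * (l + Complex.I * s) ^ 2) * gammaChar α a s)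
      (𝓝[>] 0) (𝓝 (∫ s, gammaChar α a s)) := by
    refine tendsto_integral_filter_of_dominated_convergence
      (fun s => exp (l ^ 2 / 2) * modulus α a s)
      (.of_forall fun v => Continuous.aestronglyMeasurable (by fun_prop)) ?_
      (hint.const_mul _) (.of_forall fun s => ?_)
    · filter_upwards [nhdsWithin_le_nhds (Iio_mem_nhds one_pos)] with v hv
      refine .of_forall fun s => ?_
      have hv1 : (v : ℝ) ≤ 1 := NNReal.coe_le_one.2 (mem_Iio.1 hv).le
      rw [norm_mul, norm_gammaChar, norm_cexp_half_mul_sq]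
      refine mul_le_mul_of_nonneg_right (exp_le_exp.2 ?_) (modulus_pos α a s).le
      nlinarith [mul_nonneg (sub_nonneg.2 hv1) (sq_nonneg l), mul_nonneg v.coe_nonneg (sq_nonneg s)]
    · have hcont : Continuous fun v : ℝ≥0 =>
          Complex.exp (v / 2 * (l + Complex.I * s) ^ 2) * gammaChar α a s := by fun_prop
      simpa using (hcont.tendsto 0).mono_left nhdsWithin_le_nhds
  have hre : (∫ s, gammaChar α a s).re = ∫ s, modulus α a s * cos (phase α a s) :=
    re_integral_gammaChar hint
  rw [← hre]
  refine (((Complex.continuous_re.tendsto _).comp hlim).const_mul _).const_mul _ |>.congr' ?_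
  filter_upwards [self_mem_nhdsWithin] with v hv
  rw [← Complex.ofReal_re (smoothedDensity α c v),
    smoothedDensity_eq_integral hα hl (mem_Ioi.1 hv).ne']
  simp_rw [prod_cpow_eq_tilt_mul_gammaChar hl, mul_left_comm _ (Complex.ofReal (∏ _, _))]
  rw [integral_const_mul, Complex.re_ofReal_mul, Complex.re_ofReal_mul]
  rfl

lemma smoothedDensity_le (hα : ∀ j, 0 < α j) (hint : Integrable (modulus α c)) (hv : v ≠ 0) :
    smoothedDensity α c v ≤ (2 * π)⁻¹ * ∫ s, modulus α c s := by
  have hbound : ‖∫ s : ℝ, Complex.exp (v / 2 * ((0 : ℝ) + Complex.I * s) ^ 2) *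
      ∏ j, (1 - ((0 : ℝ) + Complex.I * s) * c j) ^ (-(α j : ℂ))‖ ≤ ∫ s, modulus α c s := by
    refine norm_integral_le_of_norm_le hint (.of_forall fun s => ?_)
    rw [prod_cpow_eq_tilt_mul_gammaChar (by simp), norm_mul, norm_cexp_half_mul_sq]
    simp only [zero_mul, sub_zero, one_rpow, Finset.prod_const_one, div_one, Complex.ofReal_one,
      one_mul, norm_gammaChar]
    refine mul_le_of_le_one_left (modulus_pos α c s).le (exp_le_one_iff.2 ?_)
    nlinarith [mul_nonneg v.coe_nonneg (sq_nonneg s)]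
  refine (le_norm_self _).trans ?_
  rw [← Complex.norm_real, smoothedDensity_eq_integral hα (l := 0) (by simp) hv, norm_mul]
  refine mul_le_mul (by simp [abs_of_pos pi_pos]) hbound (norm_nonneg _) (by positivity)

end FourierInversion

/-! ### Laplace's method -/

section Elementary

lemma nonneg_of_hasDerivAt_mul_self {h g : ℝ → ℝ} {t : ℝ} (h0 : h 0 = 0)
    (hd : ∀ y ∈ uIcc 0 t, HasDerivAt h (y * g y) y) (hg : ∀ y ∈ uIcc 0 t, 0 ≤ g y) : 0 ≤ h t := by
  rcases lt_trichotomy 0 t with ht | rfl | ht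
  · rw [uIcc_of_le ht.le] at hd hg
    obtain ⟨c, hc, hslope⟩ := exists_hasDerivAt_eq_slope h (fun y => y * g y) ht
      (fun y hy => (hd y hy).continuousAt.continuousWithinAt)
      (fun y hy => hd y (Ioo_subset_Icc_self hy))
    have := mul_nonneg hc.1.le (hg c (Ioo_subset_Icc_self hc))
    rw [hslope, h0, sub_zero, sub_zero] at this
    exact nonneg_of_mul_nonneg_left (by rwa [div_eq_mul_inv] at this) (inv_pos.2 ht)
  · exact h0.ge
  · rw [uIcc_of_ge ht.le] at hd hg
    obtain ⟨c, hc, hslope⟩ := exists_hasDerivAt_eq_slope h (fun y => y * g y) ht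
      (fun y hy => (hd y hy).continuousAt.continuousWithinAt)
      (fun y hy => hd y (Ioo_subset_Icc_self hy))
    have := mul_nonpos_of_nonpos_of_nonneg hc.2.le (hg c (Ioo_subset_Icc_self hc))
    rw [hslope, h0, zero_sub, zero_sub, neg_div_neg_eq] at this
    by_contra hlt
    exact this.not_gt (div_pos_of_neg_of_neg (not_le.1 hlt) ht)

lemma arctan_le_self {x : ℝ} (hx : 0 ≤ x) : arctan x ≤ x := by
  refine sub_nonneg.1 (nonneg_of_hasDerivAt_mul_self (h := fun y => y - arctan y)
    (g := fun y => y / (1 + y ^ 2)) (by simp) (fun y _ => ?_) fun y hy => ?_)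
  · convert! (hasDerivAt_id y).sub (hasDerivAt_arctan y) using 1
    field_simp
    ring
  · rw [uIcc_of_le hx] at hy
    exact div_nonneg hy.1 (by positivity)

lemma self_sub_arctan_le_cube {x : ℝ} (hx : 0 ≤ x) : x - arctan x ≤ x ^ 3 := by
  refine sub_nonneg.1 (nonneg_of_hasDerivAt_mul_self (h := fun y => y ^ 3 - (y - arctan y))
    (g := fun y => y * (3 - (1 + y ^ 2)⁻¹)) (by simp) (fun y _ => ?_) fun y hy => ?_)
  · convert! (hasDerivAt_pow 3 y).sub ((hasDerivAt_id y).sub (hasDerivAt_arctan y)) using 1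
    field_simp
    ring
  · rw [uIcc_of_le hx] at hy
    have hinv : (1 + y ^ 2)⁻¹ ≤ 1 := inv_le_one_of_one_le₀ (by nlinarith [sq_nonneg y])
    exact mul_nonneg hy.1 (by linarith)

lemma abs_arctan (x : ℝ) : |arctan x| = arctan |x| := by
  rcases le_total 0 x with hx | hx
  · rw [abs_of_nonneg hx, abs_of_nonneg (arctan_nonneg.2 hx)]
  · have hneg : arctan x ≤ 0 := by simpa using arctan_strictMono.monotone hx
    rw [abs_of_nonpos hx, arctan_neg, abs_of_nonpos hneg]

lemma abs_arctan_le (x : ℝ) : |arctan x| ≤ |x| :=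
  (abs_arctan x).trans_le (arctan_le_self (abs_nonneg x))

lemma abs_arctan_sub_self_le (x : ℝ) : |arctan x - x| ≤ |x| ^ 3 := by
  rcases le_total 0 x with hx | hx
  · rw [abs_sub_comm, abs_of_nonneg (sub_nonneg.2 (arctan_le_self hx)), abs_of_nonneg hx]
    exact self_sub_arctan_le_cube hx
  · have hx' := neg_nonneg.2 hx
    have hle := arctan_le_self hx'
    have hcube := self_sub_arctan_le_cube hx'
    rw [arctan_neg] at hle hcube
    rw [abs_of_nonneg (by linarith), abs_of_nonpos hx]
    linarith

end Elementary

section Moments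

lemma ae_pos_gammaMeasure (a r : ℝ) : ∀ᵐ x ∂gammaMeasure a r, 0 < x := by
  have hmeas : Measurable (gammaPDF a r) := (measurable_gammaPDFReal a r).ennreal_ofReal
  rw [gammaMeasure, ae_withDensity_iff hmeas]
  filter_upwards [compl_mem_ae_iff.2 (measure_singleton (0 : ℝ))] with x hx hpdf
  exact (Ne.lt_or_gt hx).resolve_left fun hneg => hpdf (gammaPDF_of_neg hneg)

lemma lintegral_rpow_gammaMeasure {a p : ℝ} (ha : 0 < a) (hp : 0 < a + p) :
    ∫⁻ x, ENNReal.ofReal (x ^ p) ∂gammaMeasure a 1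
      = ENNReal.ofReal (Gamma (a + p) / Gamma a) := by
  have hmeas : ∀ q, Measurable (gammaPDF q 1) := fun q =>
    (measurable_gammaPDFReal q 1).ennreal_ofReal
  have hratio : 0 ≤ Gamma (a + p) / Gamma a :=
    div_nonneg (Gamma_pos_of_pos hp).le (Gamma_pos_of_pos ha).le
  calc ∫⁻ x, ENNReal.ofReal (x ^ p) ∂gammaMeasure a 1
      = ∫⁻ x, ENNReal.ofReal (Gamma (a + p) / Gamma a) * gammaPDF (a + p) 1 x := by
        rw [gammaMeasure, lintegral_withDensity_eq_lintegral_mul _ (hmeas a) (by fun_prop)]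
        refine lintegral_congr_ae ?_
        filter_upwards [compl_mem_ae_iff.2 (measure_singleton (0 : ℝ))] with x hx
        rw [Pi.mul_apply, gammaPDF, gammaPDF, mul_comm, ← ENNReal.ofReal_mul hratio]
        rcases lt_or_gt_of_ne hx with hneg | hpos
        · simp [gammaPDFReal, hneg.not_ge]
        · rw [← ENNReal.ofReal_mul (rpow_nonneg hpos.le _)]
          congr 1
          simp only [gammaPDFReal, hpos.le, if_true, one_rpow]
          rw [add_sub_right_comm, rpow_add hpos]
          have := (Gamma_pos_of_pos hp).ne'
          field_simp
    _ = ENNReal.ofReal (Gamma (a + p) / Gamma a) := by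
        rw [lintegral_const_mul _ (hmeas _), lintegral_gammaPDF_eq_one hp one_pos, mul_one]

/-- The Student density is a Gamma mixture of Gaussian densities. -/
lemma lintegral_one_add_sq_div_rpow_neg {a c : ℝ} (ha : 1 / 2 < a) (hc : 0 < c) :
    ∫⁻ s, ENNReal.ofReal ((1 + s ^ 2 / c) ^ (-a))
      = ENNReal.ofReal (√(π * c) * (Gamma (a - 1 / 2) / Gamma a)) := by
  have ha0 : 0 < a := one_half_pos.trans ha
  have := isProbabilityMeasure_gammaMeasure ha0 one_pos
  have hmixture (s : ℝ) : ENNReal.ofReal ((1 + s ^ 2 / c) ^ (-a))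
      = ∫⁻ x, ENNReal.ofReal (exp (-(s ^ 2 / c) * x)) ∂gammaMeasure a 1 := by
    rw [lintegral_exp_mul_gammaMeasure ha0 one_pos
      ((neg_nonpos.2 (by positivity)).trans_lt one_pos), div_one, sub_neg_eq_add]
  have hgauss {x : ℝ} (hx : 0 < x) : ∫⁻ s, ENNReal.ofReal (exp (-(s ^ 2 / c) * x))
      = ENNReal.ofReal (√(π * c)) * ENNReal.ofReal (x ^ (-(1 / 2) : ℝ)) := by
    have hexp (s : ℝ) : -(s ^ 2 / c) * x = -(x / c) * s ^ 2 := by ring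
    simp_rw [hexp]
    rw [← ofReal_integral_eq_lintegral_ofReal (integrable_exp_neg_mul_sq (by positivity))
      (.of_forall fun s => (exp_pos _).le), integral_gaussian, ← ENNReal.ofReal_mul (sqrt_nonneg _),
      rpow_neg hx.le, ← sqrt_eq_rpow, ← div_eq_mul_inv, ← sqrt_div (by positivity),
      div_div_eq_mul_div]
  simp_rw [hmixture]
  rw [lintegral_lintegral_swap (by fun_prop),
    lintegral_congr_ae ((ae_pos_gammaMeasure a 1).mono fun x => hgauss),
    lintegral_const_mul _ (by fun_prop), lintegral_rpow_gammaMeasure ha0 (by linarith),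
    ← ENNReal.ofReal_mul (sqrt_nonneg _), ← sub_eq_add_neg]

lemma Gamma_sub_half_le {a : ℝ} (ha : 1 < a) :
    Gamma (a - 1 / 2) ≤ Gamma a / √(a - 1) := by
  have ha1 : 0 < a - 1 := sub_pos.2 ha
  have hG1 := Gamma_pos_of_pos ha1
  have hlogconvex := Gamma_mul_add_mul_le_rpow_Gamma_mul_rpow_Gamma ha1 (ha1.trans (by linarith))
    one_half_pos one_half_pos (by norm_num) (t := a)
  have hrec : Gamma a = (a - 1) * Gamma (a - 1) := by
    simpa using Gamma_add_one ha1.ne'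
  calc Gamma (a - 1 / 2) = Gamma (1 / 2 * (a - 1) + 1 / 2 * a) := by ring_nf
    _ ≤ √(Gamma (a - 1)) * √(Gamma a) := by simpa only [sqrt_eq_rpow] using hlogconvex
    _ = Gamma a / √(a - 1) := by
      rw [hrec, sqrt_mul ha1.le, mul_left_comm, mul_self_sqrt hG1.le, mul_div_right_comm, div_sqrt]

lemma sqrt_two_pi_mul_div_le {N : ℝ} (hN : 4 ≤ N) :
    √(π * N / (N / 2 - 1)) ≤ √(2 * π) * (1 + 2 / N) := by
  have hN2 : 0 < N / 2 - 1 := by linarith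
  rw [sqrt_le_left (by positivity), mul_pow, sq_sqrt (by positivity), div_le_iff₀ hN2]
  have hcubic : 0 ≤ 2 * N ^ 2 - 4 * N - 8 := by nlinarith
  have hdiff : 2 * π * (1 + 2 / N) ^ 2 * (N / 2 - 1) - π * N
      = π * (2 * N ^ 2 - 4 * N - 8) / N ^ 2 := by
    field_simp
    ring
  have : 0 ≤ π * (2 * N ^ 2 - 4 * N - 8) / N ^ 2 := by positivity
  linarith

lemma lintegral_student_le {N : ℝ} (hN : 4 ≤ N) :
    ∫⁻ s, ENNReal.ofReal ((1 + s ^ 2 / N) ^ (-(N / 2)))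
      ≤ ENNReal.ofReal (√(2 * π) * (1 + 2 / N)) := by
  have hN1 : 1 < N / 2 := by linarith
  rw [lintegral_one_add_sq_div_rpow_neg (by linarith) (by linarith)]
  refine ENNReal.ofReal_le_ofReal (le_trans ?_ (sqrt_two_pi_mul_div_le hN))
  rw [sqrt_div (by positivity), div_eq_mul_inv (√(π * N))]
  gcongr
  rw [div_le_iff₀ (Gamma_pos_of_pos (by linarith)), inv_mul_eq_div]
  exact Gamma_sub_half_le hN1

lemma integrable_student {N : ℝ} (hN : 4 ≤ N) :
    Integrable fun s : ℝ => (1 + s ^ 2 / N) ^ (-(N / 2)) := by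
  have : 0 < N := by linarith
  refine ⟨Measurable.aestronglyMeasurable (by fun_prop), (hasFiniteIntegral_iff_ofReal
    (.of_forall fun s => rpow_nonneg (by positivity) _)).2 ?_⟩
  exact (lintegral_student_le hN).trans_lt ENNReal.ofReal_lt_top

lemma integral_student_le {N : ℝ} (hN : 4 ≤ N) :
    ∫ s : ℝ, (1 + s ^ 2 / N) ^ (-(N / 2)) ≤ √(2 * π) * (1 + 2 / N) := by
  have : 0 < N := by linarith
  rw [integral_eq_lintegral_of_nonneg_ae (.of_forall fun s => rpow_nonneg (by positivity) _)
    (integrable_student hN).1]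
  exact ENNReal.toReal_le_of_le_ofReal (by positivity) (lintegral_student_le hN)

lemma integral_pow_mul_exp_neg_sq_half (k : ℕ) :
    ∫ s : ℝ, s ^ (2 * k) * exp (-(s ^ 2 / 2)) = (2 * k - 1 : ℕ)‼ * √(2 * π) := by
  have hhalf : ∫ s in Ioi (0 : ℝ), s ^ (2 * k) * exp (-(s ^ 2 / 2))
      = (2 * k - 1 : ℕ)‼ * √(2 * π) / 2 := by
    have h := integral_rpow_mul_exp_neg_mul_rpow (p := 2) (q := 2 * k) (b := 1 / 2) two_pos
      (by linarith [Nat.cast_nonneg (α := ℝ) k]) one_half_pos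
    have hexp : (2 * k + 1 : ℝ) / 2 = k + 1 / 2 := by ring
    have hpow : (1 / 2 : ℝ) ^ (-(2 * k + 1 : ℝ) / 2) = 2 ^ k * √2 := by
      rw [neg_div, hexp, one_div, inv_rpow two_pos.le, ← rpow_neg two_pos.le, neg_neg,
        rpow_add two_pos, rpow_natCast, ← one_div, ← sqrt_eq_rpow]
    rw [hpow, hexp, Gamma_nat_add_half] at h
    refine (setIntegral_congr_fun measurableSet_Ioi fun s _ => ?_).trans (h.trans ?_)
    · have hs : s ^ (2 * k : ℝ) = s ^ (2 * k) := by exact_mod_cast rpow_natCast s (2 * k)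
      simp only [hs, rpow_two]
      ring_nf
    · rw [sqrt_mul two_pos.le]
      field_simp
  have heven := integral_comp_abs (f := fun s : ℝ => s ^ (2 * k) * exp (-(s ^ 2 / 2)))
  simp only [(even_two_mul k).pow_abs, sq_abs] at heven
  rw [heven, hhalf]
  ring

lemma integrable_pow_mul_exp_neg_sq_half (k : ℕ) :
    Integrable fun s : ℝ => s ^ (2 * k) * exp (-(s ^ 2 / 2)) := by
  refine .of_integral_ne_zero ?_
  rw [integral_pow_mul_exp_neg_sq_half]
  have := Nat.doubleFactorial_pos (2 * k - 1)
  positivity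

end Moments

section Laplace

variable {ι : Type*} [Fintype ι] {β a : ι → ℝ} {N s : ℝ}

lemma modulus_add (α β a : ι → ℝ) (s : ℝ) :
    modulus (α + β) a s = modulus α a s * modulus β a s := by
  simp only [modulus, Pi.add_apply, add_mul, Finset.sum_add_distrib, mul_add, neg_add, exp_add]

lemma phase_add (α β a : ι → ℝ) (s : ℝ) : phase (α + β) a s = phase α a s + phase β a s := by
  simp only [phase, Pi.add_apply, add_mul, Finset.sum_add_distrib]

lemma modulus_le_one (hβ : ∀ j, 0 ≤ β j) : modulus β a s ≤ 1 := by
  refine exp_le_one_iff.2 (neg_nonpos.2 (mul_nonneg (by norm_num) ?_))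
  exact Finset.sum_nonneg fun j _ => mul_nonneg (hβ j)
    (log_nonneg (le_add_of_nonneg_right (sq_nonneg _)))

lemma modulus_le_student (hN : 0 < N) (hβ : ∀ j, 0 ≤ β j) (hvar : ∑ j, β j * a j ^ 2 = 1)
    (ha : ∀ j, N * a j ^ 2 ≤ 1) : modulus β a s ≤ (1 + s ^ 2 / N) ^ (-(N / 2)) := by
  have hbase : 0 < 1 + s ^ 2 / N := by positivity
  have hbernoulli (j : ι) : N * a j ^ 2 * log (1 + s ^ 2 / N) ≤ log (1 + (s * a j) ^ 2) := by
    rw [← log_rpow hbase]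
    refine log_le_log (rpow_pos_of_pos hbase _) ?_
    have h := rpow_one_add_le_one_add_mul_self (s := s ^ 2 / N)
      (by linarith) (mul_nonneg hN.le (sq_nonneg (a j))) (ha j)
    refine h.trans_eq ?_
    field_simp
  have hsum : N * log (1 + s ^ 2 / N) ≤ ∑ j, β j * log (1 + (s * a j) ^ 2) :=
    calc N * log (1 + s ^ 2 / N) = ∑ j, β j * (N * a j ^ 2 * log (1 + s ^ 2 / N)) := by
          rw [← mul_one (N * log (1 + s ^ 2 / N)), ← hvar, Finset.mul_sum]
          exact Finset.sum_congr rfl fun j _ => by ring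
      _ ≤ _ := Finset.sum_le_sum fun j _ => mul_le_mul_of_nonneg_left (hbernoulli j) (hβ j)
  rw [modulus, rpow_def_of_pos hbase, exp_le_exp]
  linarith

lemma exp_neg_le_modulus (hβ : ∀ j, 0 ≤ β j) :
    exp (-(s ^ 2 / 2 * ∑ j, β j * a j ^ 2)) ≤ modulus β a s := by
  have hlog (j : ι) : log (1 + (s * a j) ^ 2) ≤ s ^ 2 * a j ^ 2 := by
    have := log_le_sub_one_of_pos (show 0 < 1 + (s * a j) ^ 2 by positivity)
    linarith [mul_pow s (a j) 2]
  have hsum : ∑ j, β j * log (1 + (s * a j) ^ 2) ≤ s ^ 2 * ∑ j, β j * a j ^ 2 := by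
    rw [Finset.mul_sum]
    refine Finset.sum_le_sum fun j _ => ?_
    linarith [mul_le_mul_of_nonneg_left (hlog j) (hβ j)]
  rw [modulus, exp_le_exp]
  linarith

lemma abs_phase_le_of_sum_eq_zero {d : ℝ} (hβ : ∀ j, 0 ≤ β j) (hmean : ∑ j, β j * a j = 0)
    (ha : ∀ j, |a j| ≤ d) : |phase β a s| ≤ d * |s| ^ 3 * ∑ j, β j * a j ^ 2 := by
  have hcentred : phase β a s = ∑ j, β j * (arctan (s * a j) - s * a j) := by
    have hlinear : ∑ j, β j * (s * a j) = 0 := by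
      simp_rw [mul_left_comm _ s]
      rw [← Finset.mul_sum, hmean, mul_zero]
    simp_rw [mul_sub, Finset.sum_sub_distrib, hlinear, sub_zero, phase]
  rw [hcentred, Finset.mul_sum]
  refine (Finset.abs_sum_le_sum_abs _ _).trans (Finset.sum_le_sum fun j _ => ?_)
  rw [abs_mul, abs_of_nonneg (hβ j)]
  calc β j * |arctan (s * a j) - s * a j| ≤ β j * |s * a j| ^ 3 :=
        mul_le_mul_of_nonneg_left (abs_arctan_sub_self_le _) (hβ j)
    _ = |s| ^ 3 * (β j * a j ^ 2) * |a j| := by rw [abs_mul, ← sq_abs (a j)]; ring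
    _ ≤ |s| ^ 3 * (β j * a j ^ 2) * d := by
        have := hβ j
        gcongr
        exact ha j
    _ = d * |s| ^ 3 * (β j * a j ^ 2) := by ring

lemma integrable_modulus_mul_cos {α a : ι → ℝ} (h : Integrable (modulus α a)) :
    Integrable fun s => modulus α a s * cos (phase α a s) :=
  h.mul_bdd (continuous_cos.comp (continuous_phase α a)).aestronglyMeasurable
    (.of_forall fun _ => abs_cos_le_one _)

variable [DecidableEq ι] {k : ι}

lemma single_one_nonneg {κ : Type*} [DecidableEq κ] (k j : κ) :
    0 ≤ (Pi.single k 1 : κ → ℝ) j := by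
  rw [Pi.single_apply]
  positivity

lemma sum_single_one_mul (k : ι) (x : ι → ℝ) : ∑ j, (Pi.single k 1 : ι → ℝ) j * x j = x k := by
  simp [Pi.single_apply]

lemma phase_single (k : ι) (a : ι → ℝ) (s : ℝ) :
    phase (Pi.single k 1) a s = arctan (s * a k) := sum_single_one_mul k _

lemma modulus_add_single_le_student (hN : 0 < N) (hβ : ∀ j, 0 ≤ β j)
    (hvar : ∑ j, β j * a j ^ 2 = 1) (ha : ∀ j, N * a j ^ 2 ≤ 1) :
    modulus (β + Pi.single k 1) a s ≤ (1 + s ^ 2 / N) ^ (-(N / 2)) := by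
  rw [modulus_add]
  refine (mul_le_of_le_one_right (modulus_pos _ _ _).le
    (modulus_le_one (single_one_nonneg k))).trans
    (modulus_le_student hN hβ hvar ha)

lemma gaussian_mul_le_modulus (hβ : ∀ j, 0 ≤ β j) (hvar : ∑ j, β j * a j ^ 2 = 1)
    (hk : N * a k ^ 2 ≤ 1) (hN : 0 < N) :
    exp (-(s ^ 2 / 2)) * (1 - s ^ 2 / (2 * N)) ≤ modulus (β + Pi.single k 1) a s := by
  have hak : a k ^ 2 ≤ 1 / N := by rwa [le_div_iff₀' hN]
  calc exp (-(s ^ 2 / 2)) * (1 - s ^ 2 / (2 * N))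
      ≤ exp (-(s ^ 2 / 2)) * exp (-(s ^ 2 / (2 * N))) := by
        gcongr
        exact one_sub_le_exp_neg _
    _ = exp (-(s ^ 2 / 2 * 1)) * exp (-(s ^ 2 / 2 * (1 / N))) := by
        rw [mul_one, div_mul_div_comm, mul_one]
    _ ≤ exp (-(s ^ 2 / 2 * ∑ j, β j * a j ^ 2))
          * exp (-(s ^ 2 / 2 * ∑ j, (Pi.single k 1 : ι → ℝ) j * a j ^ 2)) := by
        rw [hvar, sum_single_one_mul]
        gcongr
    _ ≤ modulus (β + Pi.single k 1) a s := by
        rw [modulus_add]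
        exact mul_le_mul (exp_neg_le_modulus hβ) (exp_neg_le_modulus (single_one_nonneg k))
          (exp_pos _).le (modulus_pos _ _ _).le

lemma phase_sq_le (hN : 0 < N) (hβ : ∀ j, 0 ≤ β j) (hmean : ∑ j, β j * a j = 0)
    (hvar : ∑ j, β j * a j ^ 2 = 1) (ha : ∀ j, N * a j ^ 2 ≤ 1) :
    phase (β + Pi.single k 1) a s ^ 2 ≤ 2 / N * (s ^ 6 + s ^ 2) := by
  have ha' (j : ι) : |a j| ≤ √(1 / N) := abs_le_sqrt ((le_div_iff₀' hN).2 (ha j))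
  have hcubic : |phase β a s| ≤ √(1 / N) * |s| ^ 3 := by
    simpa only [hvar, mul_one] using abs_phase_le_of_sum_eq_zero hβ hmean ha'
  have hlinear : |arctan (s * a k)| ≤ √(1 / N) * |s| := by
    refine (abs_arctan_le _).trans ?_
    rw [abs_mul, mul_comm]
    exact mul_le_mul_of_nonneg_right (ha' k) (abs_nonneg s)
  have habs : |phase (β + Pi.single k 1) a s| ≤ √(1 / N) * (|s| ^ 3 + |s|) := by
    rw [phase_add, phase_single]
    linarith [abs_add_le (phase β a s) (arctan (s * a k))]
  calc phase (β + Pi.single k 1) a s ^ 2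
      ≤ (√(1 / N) * (|s| ^ 3 + |s|)) ^ 2 := sq_le_sq.2 (habs.trans (le_abs_self _))
    _ = 1 / N * (|s| ^ 3 + |s|) ^ 2 := by rw [mul_pow, sq_sqrt (by positivity)]
    _ ≤ 1 / N * (2 * ((|s| ^ 3) ^ 2 + |s| ^ 2)) := by gcongr; exact add_sq_le
    _ = 2 / N * (s ^ 6 + s ^ 2) := by rw [← abs_pow, sq_abs, sq_abs]; ring

/-- A minorant of `modulus * cos phase` at unit variance. Both `modulus` and the Gaussian
`exp (-s² / 2)` lie between `exp (-s² / 2) * (1 - s² / (2 N))` and the Student kernel, and the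
cosine is at least `1 - phase² / 2`. -/
def laplaceMinorant (N s : ℝ) : ℝ :=
  2 * exp (-(s ^ 2 / 2)) - (1 + s ^ 2 / N) ^ (-(N / 2))
    - 1 / N * ((s ^ 6 + 3 / 2 * s ^ 2) * exp (-(s ^ 2 / 2)))

lemma laplaceMinorant_le (hN : 0 < N) (hβ : ∀ j, 0 ≤ β j)
    (hmean : ∑ j, β j * a j = 0) (hvar : ∑ j, β j * a j ^ 2 = 1) (ha : ∀ j, N * a j ^ 2 ≤ 1) :
    laplaceMinorant N s
      ≤ modulus (β + Pi.single k 1) a s * cos (phase (β + Pi.single k 1) a s) := by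
  rw [laplaceMinorant]
  set M := modulus (β + Pi.single k 1) a s
  set θ := phase (β + Pi.single k 1) a s
  set g := exp (-(s ^ 2 / 2))
  set S := (1 + s ^ 2 / N) ^ (-(N / 2))
  have hMS : M ≤ S := modulus_add_single_le_student hN hβ hvar ha
  have hgM : g * (1 - s ^ 2 / (2 * N)) ≤ M := gaussian_mul_le_modulus hβ hvar (ha k) hN
  have hgS : g ≤ S := by
    have h := (exp_neg_le_modulus (s := s) hβ).trans (modulus_le_student hN hβ hvar ha)
    rwa [hvar, mul_one] at h
  have hdist : |M - g| ≤ (S - g) + g * (s ^ 2 / (2 * N)) := by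
    have : 0 ≤ g * (s ^ 2 / (2 * N)) := by positivity
    rw [abs_le]
    constructor <;> linarith
  have hcos : g * (1 - 1 / N * (s ^ 6 + s ^ 2)) ≤ g * cos θ := by
    have hθ : θ ^ 2 / 2 ≤ 1 / N * (s ^ 6 + s ^ 2) := by
      have h := phase_sq_le (s := s) (k := k) hN hβ hmean hvar ha
      have : 2 / N * (s ^ 6 + s ^ 2) = 2 * (1 / N * (s ^ 6 + s ^ 2)) := by ring
      linarith
    exact mul_le_mul_of_nonneg_left (by linarith [one_sub_sq_div_two_le_cos (x := θ)])
      (exp_pos _).le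
  have herror : -|M - g| ≤ (M - g) * cos θ := by
    refine (neg_le_neg ?_).trans (neg_abs_le _)
    rw [abs_mul]
    exact mul_le_of_le_one_right (abs_nonneg _) (abs_cos_le_one _)
  have hcollect : 1 / N * ((s ^ 6 + 3 / 2 * s ^ 2) * g)
      = g * (1 / N * (s ^ 6 + s ^ 2)) + g * (s ^ 2 / (2 * N)) := by
    field_simp
    ring
  linarith

lemma integral_exp_neg_sq_half : ∫ s : ℝ, exp (-(s ^ 2 / 2)) = √(2 * π) := by
  simpa only [mul_zero, pow_zero, one_mul, Nat.zero_sub, Nat.doubleFactorial, Nat.cast_one]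
    using integral_pow_mul_exp_neg_sq_half 0

lemma integrable_exp_neg_sq_half : Integrable fun s : ℝ => exp (-(s ^ 2 / 2)) := by
  simpa only [mul_zero, pow_zero, one_mul] using integrable_pow_mul_exp_neg_sq_half 0

lemma integrable_sq_mul_exp_neg_sq_half :
    Integrable fun s : ℝ => 3 / 2 * (s ^ 2 * exp (-(s ^ 2 / 2))) :=
  (integrable_pow_mul_exp_neg_sq_half 1).const_mul (3 / 2)

lemma integrable_sextic_mul_exp_neg_sq_half :
    Integrable fun s : ℝ => (s ^ 6 + 3 / 2 * s ^ 2) * exp (-(s ^ 2 / 2)) := by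
  simp only [add_mul, mul_assoc (3 / 2 : ℝ)]
  exact (integrable_pow_mul_exp_neg_sq_half 3).add integrable_sq_mul_exp_neg_sq_half

lemma integral_sextic_mul_exp_neg_sq_half :
    ∫ s : ℝ, (s ^ 6 + 3 / 2 * s ^ 2) * exp (-(s ^ 2 / 2)) = (15 + 3 / 2) * √(2 * π) := by
  have h6 : ∫ s : ℝ, s ^ 6 * exp (-(s ^ 2 / 2)) = 15 * √(2 * π) :=
    (integral_pow_mul_exp_neg_sq_half 3).trans (by norm_num only [Nat.doubleFactorial])
  have h2 : ∫ s : ℝ, s ^ 2 * exp (-(s ^ 2 / 2)) = √(2 * π) :=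
    (integral_pow_mul_exp_neg_sq_half 1).trans
      (by norm_num only [Nat.doubleFactorial, Nat.cast_one, one_mul])
  simp only [add_mul, mul_assoc (3 / 2 : ℝ)]
  rw [integral_add (integrable_pow_mul_exp_neg_sq_half 3) integrable_sq_mul_exp_neg_sq_half,
    integral_const_mul, h6, h2]

lemma integrable_laplaceMinorant (hN : 4 ≤ N) : Integrable (laplaceMinorant N) :=
  ((integrable_exp_neg_sq_half.const_mul 2).sub (integrable_student hN)).sub
    (integrable_sextic_mul_exp_neg_sq_half.const_mul (1 / N))

lemma le_integral_laplaceMinorant (hN : 4 ≤ N) :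
    (1 - 20 / N) * √(2 * π) ≤ ∫ s, laplaceMinorant N s := by
  have hgauss := integrable_exp_neg_sq_half.const_mul 2
  have hstudent := integrable_student hN
  have hdiff : Integrable fun s : ℝ => 2 * exp (-(s ^ 2 / 2)) - (1 + s ^ 2 / N) ^ (-(N / 2)) :=
    hgauss.sub hstudent
  unfold laplaceMinorant
  rw [integral_sub hdiff (integrable_sextic_mul_exp_neg_sq_half.const_mul (1 / N)),
    integral_sub hgauss hstudent, integral_const_mul, integral_const_mul, integral_exp_neg_sq_half,
    integral_sextic_mul_exp_neg_sq_half]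
  have hsplit : (1 - 20 / N) * √(2 * π) = 2 * √(2 * π) - √(2 * π) * (1 + 2 / N)
      - 1 / N * ((15 + 3 / 2) * √(2 * π)) - 3 / 2 * (√(2 * π) / N) := by ring
  have : 0 ≤ √(2 * π) / N := by positivity
  linarith [integral_student_le hN]

lemma integrable_modulus_and_abs_integral_sub_le_of_unit_variance (hN : 4 ≤ N)
    (hβ : ∀ j, 0 ≤ β j) (hmean : ∑ j, β j * a j = 0)
    (hvar : ∑ j, β j * a j ^ 2 = 1) (ha : ∀ j, N * a j ^ 2 ≤ 1) :
    Integrable (modulus (β + Pi.single k 1) a) ∧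
    |(∫ s, modulus (β + Pi.single k 1) a s * cos (phase (β + Pi.single k 1) a s)) - √(2 * π)|
      ≤ 20 / N * √(2 * π) := by
  have hN0 : 0 < N := by linarith
  have hle (s : ℝ) : modulus (β + Pi.single k 1) a s ≤ (1 + s ^ 2 / N) ^ (-(N / 2)) :=
    modulus_add_single_le_student hN0 hβ hvar ha
  have hint : Integrable (modulus (β + Pi.single k 1) a) := by
    refine (integrable_student hN).mono' (continuous_modulus _ a).aestronglyMeasurable
      (.of_forall fun s => ?_)
    rw [norm_of_nonneg (modulus_pos _ _ _).le]
    exact hle s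
  have hcos := integrable_modulus_mul_cos hint
  have hlower := (le_integral_laplaceMinorant hN).trans <|
    integral_mono (integrable_laplaceMinorant hN) hcos fun s =>
      laplaceMinorant_le (k := k) hN0 hβ hmean hvar ha
  have hupper := (integral_mono hcos (integrable_student hN) fun s =>
    (mul_le_of_le_one_right (modulus_pos _ _ s).le (cos_le_one _)).trans (hle s)).trans
      (integral_student_le hN)
  have hN20 : √(2 * π) * (1 + 2 / N) ≤ √(2 * π) * (1 + 20 / N) := by gcongr; norm_num
  refine ⟨hint, abs_le.2 ⟨?_, ?_⟩⟩ <;> linarith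

theorem integrable_modulus_and_abs_integral_sub_le {B : ℝ} (hB : 0 < B) (hN : 4 ≤ N)
    (hβ : ∀ j, 0 ≤ β j) (hmean : ∑ j, β j * a j = 0) (hvar : ∑ j, β j * a j ^ 2 = B)
    (ha : ∀ j, N * a j ^ 2 ≤ B) :
    Integrable (modulus (β + Pi.single k 1) a) ∧
    |(∫ s, modulus (β + Pi.single k 1) a s * cos (phase (β + Pi.single k 1) a s)) - √(2 * π / B)|
      ≤ 20 / N * √(2 * π / B) := by
  set t := √B
  have ht : 0 < t := sqrt_pos.2 hB
  have ht2 : t ^ 2 = B := sq_sqrt hB.le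
  have hscale (α : ι → ℝ) (s : ℝ) : modulus α a s = modulus α (fun j => a j / t) (s * t) ∧
      phase α a s = phase α (fun j => a j / t) (s * t) := by
    simp only [modulus, phase, mul_assoc, mul_div_cancel₀ _ ht.ne', and_self]
  obtain ⟨hint, habs⟩ := integrable_modulus_and_abs_integral_sub_le_of_unit_variance
    (a := fun j => a j / t) (k := k) hN hβ
    (by simp only [← mul_div_assoc, ← Finset.sum_div, hmean, zero_div])
    (by simp only [div_pow, ← mul_div_assoc, ← Finset.sum_div, hvar, ht2, div_self hB.ne'])
    (fun j => by rw [div_pow, ht2, ← mul_div_assoc, div_le_one hB]; exact ha j)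
  refine ⟨?_, ?_⟩
  · simpa only [← (hscale _ _).1] using hint.comp_mul_right' ht.ne'
  · have hsubst := Measure.integral_comp_mul_right
      (fun s => modulus (β + Pi.single k 1) (fun j => a j / t) s *
        cos (phase (β + Pi.single k 1) (fun j => a j / t) s)) t
    simp only [← (hscale _ _).1, ← (hscale _ _).2, abs_of_pos (inv_pos.2 ht), smul_eq_mul] at hsubst
    rw [hsubst, sqrt_div (by positivity), div_eq_inv_mul, ← mul_sub, abs_mul,
      abs_of_pos (inv_pos.2 ht), mul_left_comm]
    gcongr

end Laplace

/-! ### Convex duality for `Kinfstar` -/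

lemma hasDerivAt_self_sub_log_sub_sq_div {C y : ℝ} (hC : C ≠ 0) (hy : -1 < y) :
    HasDerivAt (fun y : ℝ => y - log (1 + y) - y ^ 2 / (2 * C))
      (y * ((C - 1 - y) / ((1 + y) * C))) y := by
  have hy' : 1 + y ≠ 0 := by linarith
  refine (((hasDerivAt_id y).sub (((hasDerivAt_id y).const_add 1).log hy')).sub
    ((hasDerivAt_pow 2 y).div_const (2 * C))).congr_deriv ?_
  push_cast
  simp only [id_eq]
  field_simp
  ring

lemma sq_div_le_self_sub_log {C t : ℝ} (ht : -1 < t) (h1 : 1 ≤ C) (h : 1 + t ≤ C) :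
    t ^ 2 / (2 * C) ≤ t - log (1 + t) := by
  have hmem (y : ℝ) (hy : y ∈ uIcc 0 t) : -1 < y ∧ y ≤ C - 1 :=
    ⟨(lt_min (by norm_num) ht).trans_le hy.1, hy.2.trans (max_le (by linarith) (by linarith))⟩
  have hdiff := nonneg_of_hasDerivAt_mul_self (t := t)
    (h := fun y => y - log (1 + y) - y ^ 2 / (2 * C)) (by simp)
    (fun y hy => hasDerivAt_self_sub_log_sub_sq_div (by linarith) (hmem y hy).1)
    (fun y hy => div_nonneg (by linarith [(hmem y hy).2])
      (mul_nonneg (by linarith [(hmem y hy).1]) (by linarith)))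
  linarith

lemma self_sub_log_le_sq_div {C t : ℝ} (hC : 0 < C) (h1 : C ≤ 1) (h : C ≤ 1 + t) :
    t - log (1 + t) ≤ t ^ 2 / (2 * C) := by
  have hmem (y : ℝ) (hy : y ∈ uIcc 0 t) : C - 1 ≤ y :=
    (le_min (by linarith) (by linarith)).trans hy.1
  have hdiff := nonneg_of_hasDerivAt_mul_self (t := t)
    (h := fun y => -(y - log (1 + y) - y ^ 2 / (2 * C))) (by simp)
    (fun y hy => by
      simpa only [mul_neg] using (hasDerivAt_self_sub_log_sub_sq_div hC.ne'
        (by linarith [hmem y hy])).fun_neg)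
    (fun y hy => neg_nonneg.2 (div_nonpos_of_nonpos_of_nonneg (by linarith [hmem y hy])
      (mul_nonneg (by linarith [hmem y hy]) hC.le)))
  linarith

lemma hasDerivAt_of_squeeze {L K U : ℝ → ℝ} {d x : ℝ} (hL : HasDerivAt L d x)
    (hU : HasDerivAt U d x) (hLx : L x = K x) (hUx : U x = K x)
    (hle : ∀ᶠ y in 𝓝 x, L y ≤ K y ∧ K y ≤ U y) : HasDerivAt K d x := by
  rw [hasDerivAt_iff_isLittleO] at hL hU ⊢
  refine Asymptotics.IsBigO.trans_isLittleO (Asymptotics.IsBigO.of_bound 1 ?_)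
    (hL.norm_left.add hU.norm_left)
  filter_upwards [hle] with y hy
  simp only [one_mul, hLx, hUx, norm_eq_abs, smul_eq_mul]
  have hlower := neg_abs_le (L y - K x - (y - x) * d)
  have hupper := le_abs_self (U y - K x - (y - x) * d)
  have hL0 := abs_nonneg (L y - K x - (y - x) * d)
  have hU0 := abs_nonneg (U y - K x - (y - x) * d)
  rw [abs_of_nonneg (add_nonneg hL0 hU0), abs_le]
  constructor <;> linarith [hy.1, hy.2]

/-- The centred values `f j - u` of a function, tilted by the dual variable `l`. -/
def tilt {ι : Type*} (f : ι → ℝ) (u l : ℝ) (j : ι) : ℝ := (f j - u) / (1 - l * (f j - u))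

/-- The dual function `l ↦ ∑ j, p j * log (1 - l (f j - u))` of the problem defining
`Kinfstar p u f`. -/
def kinfDual {ι : Type*} [Fintype ι] (p f : ι → ℝ) (u l : ℝ) : ℝ :=
  ∑ j, p j * log (1 - l * (f j - u))

/-- `l` is a critical point of the dual function `kinfDual p f u`, hence its maximiser. -/
structure IsDualPoint {ι : Type*} [Fintype ι] (p f : ι → ℝ) (u l : ℝ) : Prop where
  mul_sub_lt_one : ∀ j, l * (f j - u) < 1
  sum_mul_tilt : ∑ j, p j * tilt f u l j = 0

/-- `p` is a strictly positive probability vector and `f` takes values in `[0, b]`, attaining the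
endpoints `0` and `b` at `i₀` and `i₁`. -/
structure SpansInterval {ι : Type*} [Fintype ι] (p f : ι → ℝ) (b : ℝ) (i₀ i₁ : ι) : Prop where
  pos : ∀ j, 0 < p j
  sum_eq_one : ∑ j, p j = 1
  right_pos : 0 < b
  mem_Icc : ∀ j, f j ∈ Icc 0 b
  apply_left : f i₀ = 0
  apply_right : f i₁ = b

section Dual

variable {ι : Type*} {p f : ι → ℝ} {b u l : ℝ} {i₀ i₁ : ι}

lemma tilt_le_tilt {j k : ι} (hj : l * (f j - u) < 1) (hk : l * (f k - u) < 1)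
    (h : f j ≤ f k) : tilt f u l j ≤ tilt f u l k := by
  rw [tilt, tilt, div_le_div_iff₀ (sub_pos.2 hj) (sub_pos.2 hk)]
  linarith

lemma one_add_mul_tilt {j : ι} (hj : l * (f j - u) < 1) :
    1 + l * tilt f u l j = (1 - l * (f j - u))⁻¹ := by
  have := (sub_pos.2 hj).ne'
  rw [tilt]
  field_simp
  ring

lemma sub_mul_one_add_mul_tilt {j : ι} (hj : l * (f j - u) < 1) :
    (f j - u) * (1 + l * tilt f u l j) = tilt f u l j := by
  rw [one_add_mul_tilt hj, tilt, div_eq_mul_inv]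

lemma sub_mul_tilt_nonneg {j : ι} (hj : l * (f j - u) < 1) : 0 ≤ (f j - u) * tilt f u l j := by
  rw [tilt, mul_div_assoc']
  exact div_nonneg (mul_self_nonneg _) (sub_pos.2 hj).le

variable [Fintype ι]

lemma sum_mul_sub (hp : ∑ j, p j = 1) (f : ι → ℝ) (u : ℝ) :
    ∑ j, p j * (f j - u) = ∑ j, f j * p j - u := by
  simp only [mul_sub, Finset.sum_sub_distrib, ← Finset.sum_mul, hp, one_mul,
    mul_comm (f _)]

lemma IsDualPoint.sum_mul_sub_eq (h : IsDualPoint p f u l) :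
    ∑ j, p j * (f j - u) = -(l * ∑ j, p j * ((f j - u) * tilt f u l j)) := by
  rw [← zero_sub, ← h.sum_mul_tilt, Finset.mul_sum, ← Finset.sum_sub_distrib]
  refine Finset.sum_congr rfl fun j _ => ?_
  linear_combination p j * sub_mul_one_add_mul_tilt (h.mul_sub_lt_one j)

lemma IsDualPoint.pos (hp : ∀ j, 0 ≤ p j) (hp1 : ∑ j, p j = 1) (h : IsDualPoint p f u l)
    (hu : ∑ j, f j * p j < u) : 0 < l := by
  have hV : 0 ≤ ∑ j, p j * ((f j - u) * tilt f u l j) :=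
    Finset.sum_nonneg fun j _ => mul_nonneg (hp j) (sub_mul_tilt_nonneg (h.mul_sub_lt_one j))
  have hlV := h.sum_mul_sub_eq
  rw [sum_mul_sub hp1] at hlV
  exact pos_of_mul_pos_left (by linarith) hV

lemma two_mul_kinfDual_eq (h : IsDualPoint p f u l) :
    2 * kinfDual p f u l
      = ∑ j, p j * (2 * (l * tilt f u l j - log (1 + l * tilt f u l j))) := by
  have hterm (j : ι) : p j * (2 * (l * tilt f u l j - log (1 + l * tilt f u l j)))
      = 2 * l * (p j * tilt f u l j) + 2 * (p j * log (1 - l * (f j - u))) := by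
    rw [one_add_mul_tilt (h.mul_sub_lt_one j), log_inv]
    ring
  simp only [hterm, Finset.sum_add_distrib, ← Finset.mul_sum, h.sum_mul_tilt, mul_zero, zero_add,
    kinfDual]

namespace SpansInterval

variable (S : SpansInterval p f b i₀ i₁)

include S

lemma mean_pos : 0 < ∑ j, f j * p j := by
  refine Finset.sum_pos' (fun j _ => mul_nonneg (S.mem_Icc j).1 (S.pos j).le)
    ⟨i₁, Finset.mem_univ _, ?_⟩
  rw [S.apply_right]
  exact mul_pos S.right_pos (S.pos i₁)

lemma mean_lt : ∑ j, f j * p j < b := by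
  have hlt : ∑ j, f j * p j < ∑ j, b * p j := by
    refine Finset.sum_lt_sum
      (fun j _ => mul_le_mul_of_nonneg_right (S.mem_Icc j).2 (S.pos j).le)
      ⟨i₀, Finset.mem_univ _, ?_⟩
    rw [S.apply_left]
    exact mul_lt_mul_of_pos_right S.right_pos (S.pos i₀)
  rwa [← Finset.mul_sum, S.sum_eq_one, mul_one] at hlt

lemma mul_sub_lt_one (hl : 0 ≤ l) (hlb : l * (b - u) < 1) (j : ι) : l * (f j - u) < 1 :=
  (mul_le_mul_of_nonneg_left (sub_le_sub_right (S.mem_Icc j).2 u) hl).trans_lt hlb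

lemma neg_le_tilt (hl : 0 ≤ l) (hlt : ∀ j, l * (f j - u) < 1) (j : ι) :
    -u ≤ tilt f u l j := by
  have hleft : f i₀ ≤ f j := S.apply_left.trans_le (S.mem_Icc j).1
  refine le_trans ?_ (tilt_le_tilt (hlt i₀) (hlt j) hleft)
  rw [tilt, le_div_iff₀ (sub_pos.2 (hlt i₀)), S.apply_left]
  linarith [mul_nonneg hl (mul_self_nonneg u)]

/-- The dual variable `l₁` is chosen so that `tilt f u l₁ i₁ = T`. -/
lemma exists_sum_mul_tilt_nonneg (hu : 0 ≤ u) (hub : u < b) :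
    ∃ l₁, 0 ≤ l₁ ∧ l₁ * (b - u) < 1 ∧ 0 ≤ ∑ j, p j * tilt f u l₁ j := by
  classical
  have hbu : 0 < b - u := sub_pos.2 hub
  have hp := S.pos i₁
  set T := b - u + u / p i₁
  have hbT : b - u ≤ T := le_add_of_nonneg_right (by positivity)
  have hT : 0 < T := hbu.trans_le hbT
  have hl₁ : 0 ≤ (b - u)⁻¹ - T⁻¹ := sub_nonneg.2 (inv_anti₀ hbu hbT)
  have hmul : ((b - u)⁻¹ - T⁻¹) * (b - u) = 1 - (b - u) / T := by
    rw [sub_mul, inv_mul_cancel₀ hbu.ne', inv_mul_eq_div]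
  have hlt : ((b - u)⁻¹ - T⁻¹) * (b - u) < 1 := by
    rw [hmul]
    linarith [div_pos hbu hT]
  refine ⟨(b - u)⁻¹ - T⁻¹, hl₁, hlt, ?_⟩
  have htilt : tilt f u ((b - u)⁻¹ - T⁻¹) i₁ = T := by
    rw [tilt, S.apply_right, hmul, sub_sub_cancel, div_div_cancel₀ hbu.ne']
  have hrest := S.neg_le_tilt hl₁ (S.mul_sub_lt_one hl₁ hlt)
  calc (0 : ℝ) ≤ p i₁ * (b - u) + p i₁ * u := by positivity
    _ = p i₁ * T + (1 - p i₁) * -u := by simp only [T]; field_simp; ring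
    _ = p i₁ * T + ∑ j ∈ Finset.univ.erase i₁, p j * -u := by
      rw [← Finset.sum_mul, ← S.sum_eq_one, ← Finset.sum_erase_eq_sub (Finset.mem_univ i₁)]
    _ ≤ p i₁ * T + ∑ j ∈ Finset.univ.erase i₁, p j * tilt f u ((b - u)⁻¹ - T⁻¹) j := by
      gcongr with j
      · exact (S.pos j).le
      · exact hrest j
    _ = ∑ j, p j * tilt f u ((b - u)⁻¹ - T⁻¹) j := by
      simpa only [htilt] using Finset.add_sum_erase Finset.univ
        (fun j => p j * tilt f u ((b - u)⁻¹ - T⁻¹) j) (Finset.mem_univ i₁)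

lemma exists_isDualPoint (hu : ∑ j, f j * p j ≤ u) (hub : u < b) : ∃ l, IsDualPoint p f u l := by
  obtain ⟨l₁, hl₁, hlt, hend⟩ := S.exists_sum_mul_tilt_nonneg (S.mean_pos.le.trans hu) hub
  have hmem (l : ℝ) (hl : l ∈ Icc 0 l₁) : ∀ j, l * (f j - u) < 1 :=
    S.mul_sub_lt_one hl.1
      ((mul_le_mul_of_nonneg_right hl.2 (sub_pos.2 hub).le).trans_lt hlt)
  have hcont : ContinuousOn (fun l => ∑ j, p j * tilt f u l j) (Icc 0 l₁) :=
    continuousOn_finsetSum _ fun j _ => continuousOn_const.mul <|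
      continuousOn_const.div (by fun_prop) fun l hl => (sub_pos.2 (hmem l hl j)).ne'
  have hstart : ∑ j, p j * tilt f u 0 j ≤ 0 := by
    simp only [tilt, zero_mul, sub_zero, div_one]
    rw [sum_mul_sub S.sum_eq_one]
    exact sub_nonpos.2 hu
  obtain ⟨l, hl, hzero⟩ := intermediate_value_Icc hl₁ hcont ⟨hstart, hend⟩
  exact ⟨l, hmem l hl, hzero⟩

lemma sum_mul_sub_mul_tilt_pos (h : IsDualPoint p f u l) :
    0 < ∑ j, p j * ((f j - u) * tilt f u l j) := by
  refine Finset.sum_pos' (fun j _ => mul_nonneg (S.pos j).le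
    (sub_mul_tilt_nonneg (h.mul_sub_lt_one j))) ?_
  obtain ⟨j, hj⟩ : ∃ j, f j ≠ u := by
    by_contra! hconst
    have h0 := (hconst i₀).symm.trans S.apply_left
    have h1 := (hconst i₁).symm.trans S.apply_right
    linarith [S.right_pos]
  refine ⟨j, Finset.mem_univ j, mul_pos (S.pos j) ?_⟩
  rw [tilt, mul_div_assoc']
  exact div_pos (mul_self_pos.2 (sub_ne_zero.2 hj)) (sub_pos.2 (h.mul_sub_lt_one j))

/-- With `t = l * tilt`, both sides are weighted sums of `t²`, and the value of the dual function
is the weighted sum of `t - log (1 + t)`, where `1 + t` runs between its values at `i₀`, `i₁`. -/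
lemma kinfDual_bounds (hu : 0 ≤ u) (hub : u ≤ b) (hl : 0 ≤ l) (h : IsDualPoint p f u l) :
    l ^ 2 * (∑ j, p j * tilt f u l j ^ 2) * (1 - l * (f i₁ - u)) ≤ 2 * kinfDual p f u l ∧
    2 * kinfDual p f u l ≤ l ^ 2 * (∑ j, p j * tilt f u l j ^ 2) * (1 - l * (f i₀ - u)) := by
  have hr (j : ι) : 0 < 1 - l * (f j - u) := sub_pos.2 (h.mul_sub_lt_one j)
  have hsum (r : ℝ) : l ^ 2 * (∑ j, p j * tilt f u l j ^ 2) * r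
      = ∑ j, p j * (2 * ((l * tilt f u l j) ^ 2 / (2 * r⁻¹))) := by
    simp only [Finset.mul_sum, Finset.sum_mul]
    refine Finset.sum_congr rfl fun j _ => ?_
    rw [← div_div, div_inv_eq_mul]
    ring
  have hr₁ (j : ι) : 1 - l * (f i₁ - u) ≤ 1 - l * (f j - u) := by
    rw [S.apply_right]
    linarith [mul_le_mul_of_nonneg_left (S.mem_Icc j).2 hl]
  have hr₀ (j : ι) : 1 - l * (f j - u) ≤ 1 - l * (f i₀ - u) := by
    rw [S.apply_left]
    linarith [mul_le_mul_of_nonneg_left (S.mem_Icc j).1 hl]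
  have hone₁ : 1 - l * (f i₁ - u) ≤ 1 := by
    rw [S.apply_right]
    linarith [mul_nonneg hl (sub_nonneg.2 hub)]
  have hone₀ : 1 ≤ 1 - l * (f i₀ - u) := by
    rw [S.apply_left]
    linarith [mul_nonneg hl hu]
  rw [two_mul_kinfDual_eq h, hsum, hsum]
  constructor <;> refine Finset.sum_le_sum fun j _ => mul_le_mul_of_nonneg_left
    (mul_le_mul_of_nonneg_left ?_ zero_le_two) (S.pos j).le
  · refine sq_div_le_self_sub_log ?_ ((one_le_inv₀ (hr i₁)).2 hone₁) ?_
    · linarith [one_add_mul_tilt (h.mul_sub_lt_one j), inv_pos.2 (hr j)]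
    · rw [one_add_mul_tilt (h.mul_sub_lt_one j)]
      exact inv_anti₀ (hr i₁) (hr₁ j)
  · refine self_sub_log_le_sq_div (inv_pos.2 (hr i₀)) (inv_le_one_of_one_le₀ hone₀) ?_
    rw [one_add_mul_tilt (h.mul_sub_lt_one j)]
    exact inv_anti₀ (hr j) (hr₀ j)

end SpansInterval

end Dual

/-- `q` is a competitor in the infimum defining `Kinfstar p u f`. -/
structure IsFeasible {m : ℕ} (p f : Fin (m + 1) → ℝ) (u : ℝ) (q : Fin (m + 1) → ℝ) : Prop where
  mem_stdSimplex : q ∈ stdSimplex ℝ (Fin (m + 1))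
  support : ∀ i, q i = 0 → p i = 0
  mean : ∑ i, f i * q i = u

section Kinfstar

variable {m : ℕ} {p f q : Fin (m + 1) → ℝ} {b u l : ℝ} {i₀ i₁ : Fin (m + 1)}

lemma IsFeasible.pos (hp : ∀ j, 0 < p j) (hq : IsFeasible p f u q) (j : Fin (m + 1)) : 0 < q j :=
  (hq.mem_stdSimplex.1 j).lt_of_ne' fun h => (hp j).ne' (hq.support j h)

lemma klReal_eq_sum (hp : ∀ j, 0 < p j) (q : Fin (m + 1) → ℝ) :
    klReal p q = ∑ j, p j * log (p j / q j) :=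
  Finset.sum_congr rfl fun j _ => if_neg (hp j).ne'

lemma kinfDual_le_klReal (hp : ∀ j, 0 < p j) (hp1 : ∑ j, p j = 1)
    (hl : ∀ j, l * (f j - u) < 1) (hq : IsFeasible p f u q) :
    kinfDual p f u l ≤ klReal p q := by
  have hterm (j : Fin (m + 1)) : p j * log (1 - l * (f j - u)) - p j * log (p j / q j)
      ≤ q j * (1 - l * (f j - u)) - p j := by
    have hr : 0 < 1 - l * (f j - u) := sub_pos.2 (hl j)
    have hpj := hp j
    have hqj := hq.pos hp j
    have hlog := mul_le_mul_of_nonneg_left (log_le_sub_one_of_pos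
      (show 0 < (1 - l * (f j - u)) / (p j / q j) by positivity)) hpj.le
    rw [log_div hr.ne' (by positivity), mul_sub] at hlog
    refine hlog.trans_eq ?_
    field_simp
  have htotal : ∑ j, (q j * (1 - l * (f j - u)) - p j) = 0 := by
    have hmean := sum_mul_sub hq.mem_stdSimplex.2 f u
    simp only [mul_sub (q _), mul_one, mul_left_comm (q _) l, Finset.sum_sub_distrib,
      ← Finset.mul_sum, hq.mem_stdSimplex.2, hp1] at hmean ⊢
    rw [hmean, hq.mean]
    ring
  have hsum := Finset.sum_le_sum fun j (_ : j ∈ Finset.univ) => hterm j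
  rw [htotal, Finset.sum_sub_distrib, ← klReal_eq_sum hp] at hsum
  exact sub_nonpos.1 hsum

lemma kinfDual_le_Kinfstar (hp : ∀ j, 0 < p j) (hp1 : ∑ j, p j = 1)
    (hl : ∀ j, l * (f j - u) < 1) (hq : IsFeasible p f u q) :
    kinfDual p f u l ≤ Kinfstar p u f := by
  refine le_csInf ⟨_, q, hq.mem_stdSimplex, hq.support, hq.mean, rfl⟩ ?_
  rintro _ ⟨q', hmem, hsupp, hmean, rfl⟩
  exact kinfDual_le_klReal hp hp1 hl ⟨hmem, hsupp, hmean⟩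

lemma Kinfstar_le_klReal (hp : ∀ j, 0 < p j) (hp1 : ∑ j, p j = 1) (hq : IsFeasible p f u q) :
    Kinfstar p u f ≤ klReal p q := by
  refine csInf_le ⟨kinfDual p f u 0, ?_⟩ ⟨q, hq.mem_stdSimplex, hq.support, hq.mean, rfl⟩
  rintro _ ⟨q', hmem, hsupp, hmean, rfl⟩
  exact kinfDual_le_klReal hp hp1 (fun j => by simp only [zero_mul, zero_lt_one])
    ⟨hmem, hsupp, hmean⟩

/-- The optimal `q` for the level `u`, multiplied by `1 + s (f - u)` to move its mean away from
`u`. -/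
def perturbedOptimum (p f : Fin (m + 1) → ℝ) (u l s : ℝ) (j : Fin (m + 1)) : ℝ :=
  p j * ((1 + l * tilt f u l j) * (1 + s * (f j - u)))

lemma isFeasible_perturbedOptimum (hp : ∀ j, 0 < p j) (hp1 : ∑ j, p j = 1)
    (h : IsDualPoint p f u l) {s : ℝ} (hs : ∀ j, 0 < 1 + s * (f j - u)) :
    IsFeasible p f (u + s * ∑ j, p j * ((f j - u) * tilt f u l j))
      (perturbedOptimum p f u l s) := by
  have hpos (j : Fin (m + 1)) : 0 < perturbedOptimum p f u l s j := by
    refine mul_pos (hp j) (mul_pos ?_ (hs j))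
    rw [one_add_mul_tilt (h.mul_sub_lt_one j)]
    exact inv_pos.2 (sub_pos.2 (h.mul_sub_lt_one j))
  have hmass : ∑ j, perturbedOptimum p f u l s j = 1 := by
    have hterm (j : Fin (m + 1)) :
        perturbedOptimum p f u l s j = p j + (l + s) * (p j * tilt f u l j) := by
      rw [perturbedOptimum]
      linear_combination p j * s * sub_mul_one_add_mul_tilt (h.mul_sub_lt_one j)
    simp only [hterm, Finset.sum_add_distrib, ← Finset.mul_sum, h.sum_mul_tilt, hp1, mul_zero,
      add_zero]
  refine ⟨⟨fun j => (hpos j).le, hmass⟩, fun j hj => absurd hj (hpos j).ne', ?_⟩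
  have hterm (j : Fin (m + 1)) : perturbedOptimum p f u l s j * (f j - u)
      = p j * tilt f u l j + s * (p j * ((f j - u) * tilt f u l j)) := by
    rw [perturbedOptimum]
    linear_combination p j * (1 + s * (f j - u)) *
      sub_mul_one_add_mul_tilt (h.mul_sub_lt_one j)
  have hmean := sum_mul_sub hmass f u
  simp only [hterm, Finset.sum_add_distrib, ← Finset.mul_sum, h.sum_mul_tilt, zero_add] at hmean
  linarith

lemma klReal_perturbedOptimum (hp : ∀ j, 0 < p j) (h : IsDualPoint p f u l) {s : ℝ}
    (hs : ∀ j, 0 < 1 + s * (f j - u)) :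
    klReal p (perturbedOptimum p f u l s)
      = kinfDual p f u l - ∑ j, p j * log (1 + s * (f j - u)) := by
  rw [klReal_eq_sum hp, kinfDual, ← Finset.sum_sub_distrib]
  refine Finset.sum_congr rfl fun j _ => ?_
  have hr := sub_pos.2 (h.mul_sub_lt_one j)
  rw [perturbedOptimum, one_add_mul_tilt (h.mul_sub_lt_one j), ← div_div, div_self (hp j).ne',
    one_div, mul_inv, inv_inv, log_mul hr.ne' (inv_pos.2 (hs j)).ne', log_inv]
  ring

lemma Kinfstar_eq_kinfDual (hp : ∀ j, 0 < p j) (hp1 : ∑ j, p j = 1) (h : IsDualPoint p f u l) :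
    Kinfstar p u f = kinfDual p f u l := by
  have hs (j : Fin (m + 1)) : 0 < 1 + 0 * (f j - u) := by linarith
  have hq := isFeasible_perturbedOptimum hp hp1 h hs
  have hkl := klReal_perturbedOptimum hp h hs
  simp only [zero_mul, add_zero] at hq
  simp only [zero_mul, add_zero, log_one, mul_zero, Finset.sum_const_zero, sub_zero] at hkl
  exact le_antisymm (hkl ▸ Kinfstar_le_klReal hp hp1 hq)
    (kinfDual_le_Kinfstar hp hp1 h.mul_sub_lt_one hq)

lemma hasDerivAt_kinfDual (hp1 : ∑ j, p j = 1) (h : IsDualPoint p f u l) :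
    HasDerivAt (fun v => kinfDual p f v l) l u := by
  have hterm (j : Fin (m + 1)) (_ : j ∈ Finset.univ) :
      HasDerivAt (fun v => p j * log (1 - l * (f j - v))) (p j * (l * (1 + l * tilt f u l j)))
        u := by
    have hinner : HasDerivAt (fun v => 1 - l * (f j - v)) l u := by
      simpa only [mul_neg, mul_one, neg_neg] using
        (((hasDerivAt_id' u).const_sub (f j)).const_mul l).const_sub 1
    rw [one_add_mul_tilt (h.mul_sub_lt_one j), ← div_eq_mul_inv]
    exact (hinner.log (sub_pos.2 (h.mul_sub_lt_one j)).ne').const_mul (p j)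
  refine (HasDerivAt.fun_sum hterm).congr_deriv ?_
  simp only [mul_left_comm (p _) l, ← Finset.mul_sum]
  simp only [mul_add, mul_one, Finset.sum_add_distrib, mul_left_comm (p _) l, ← Finset.mul_sum,
    h.sum_mul_tilt, hp1, mul_zero, add_zero]

/-- Weak duality bounds `Kinfstar` from below by the dual function at `l`, and the perturbed optimum
bounds it from above; both bounds are exact at `u` and have slope `l` there. -/
lemma hasDerivAt_Kinfstar (S : SpansInterval p f b i₀ i₁) (h : IsDualPoint p f u l) :
    HasDerivAt (fun v => Kinfstar p v f) l u := by
  set V := ∑ j, p j * ((f j - u) * tilt f u l j)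
  have hV : V ≠ 0 := (S.sum_mul_sub_mul_tilt_pos h).ne'
  have hupper : HasDerivAt
      (fun v => kinfDual p f u l - ∑ j, p j * log (1 + (v - u) / V * (f j - u))) l u := by
    have hterm (j : Fin (m + 1)) (_ : j ∈ Finset.univ) :
        HasDerivAt (fun v => p j * log (1 + (v - u) / V * (f j - u)))
          (p j * (f j - u) / V) u := by
      have hinner : HasDerivAt (fun v => 1 + (v - u) / V * (f j - u)) (1 / V * (f j - u)) u :=
        ((((hasDerivAt_id' u).sub_const u).div_const V).mul_const (f j - u)).const_add 1
      refine ((hinner.log (by simp)).const_mul (p j)).congr_deriv ?_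
      rw [sub_self, zero_div, zero_mul, add_zero, div_one]
      ring
    refine ((HasDerivAt.fun_sum hterm).const_sub _).congr_deriv ?_
    rw [← Finset.sum_div, h.sum_mul_sub_eq, neg_div, neg_neg, mul_div_cancel_right₀ _ hV]
  have hK := Kinfstar_eq_kinfDual S.pos S.sum_eq_one h
  refine hasDerivAt_of_squeeze (hasDerivAt_kinfDual S.sum_eq_one h) hupper hK.symm
    (by simp [hK]) ?_
  have hlt : ∀ᶠ v in 𝓝 u, ∀ j, l * (f j - v) < 1 := eventually_all.2 fun j =>
    Tendsto.eventually_lt_const (h.mul_sub_lt_one j)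
      (Continuous.tendsto (f := fun v => l * (f j - v)) (by fun_prop) u)
  have hpos : ∀ᶠ v in 𝓝 u, ∀ j, 0 < 1 + (v - u) / V * (f j - u) := eventually_all.2 fun j =>
    Tendsto.eventually_const_lt (by simp)
      (Continuous.tendsto (f := fun v => 1 + (v - u) / V * (f j - u)) (by fun_prop) u)
  filter_upwards [hlt, hpos] with v hlt hpos
  have hq := isFeasible_perturbedOptimum S.pos S.sum_eq_one h hpos
  rw [div_mul_cancel₀ _ hV, add_sub_cancel] at hq
  exact ⟨kinfDual_le_Kinfstar S.pos S.sum_eq_one hlt hq,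
    (Kinfstar_le_klReal S.pos S.sum_eq_one hq).trans_eq
      (klReal_perturbedOptimum S.pos h hpos)⟩

lemma Kinfstar_mean (hp : ∀ j, 0 < p j) (hp1 : ∑ j, p j = 1) :
    Kinfstar p (∑ j, f j * p j) f = 0 := by
  have h : IsDualPoint p f (∑ j, f j * p j) 0 := by
    refine ⟨fun j => by simp only [zero_mul, zero_lt_one], ?_⟩
    simp only [tilt, zero_mul, sub_zero, div_one]
    rw [sum_mul_sub hp1, sub_self]
  rw [Kinfstar_eq_kinfDual hp hp1 h]
  simp only [kinfDual, zero_mul, sub_zero, log_one, mul_zero, Finset.sum_const_zero]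

/-- Weak duality with `l = 1 / (2 (b - u))`. -/
lemma le_Kinfstar_of_lt_right (S : SpansInterval p f b i₀ i₁) (hu : ∑ j, f j * p j ≤ u)
    (hub : u < b) : p i₀ * log (u / (2 * (b - u))) - log 2 ≤ Kinfstar p u f := by
  have hbu : 0 < b - u := sub_pos.2 hub
  have hu0 : 0 < u := S.mean_pos.trans_le hu
  set l := 1 / (2 * (b - u)) with hl
  have hl0 : 0 < l := by positivity
  have hhalf (j : Fin (m + 1)) : l * (f j - u) ≤ 1 / 2 :=
    (mul_le_mul_of_nonneg_left (sub_le_sub_right (S.mem_Icc j).2 u) hl0.le).trans_eq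
      (by rw [hl]; field_simp)
  obtain ⟨l', h'⟩ := S.exists_isDualPoint hu hub
  have hq := isFeasible_perturbedOptimum S.pos S.sum_eq_one h' (s := 0) fun j => by linarith
  rw [zero_mul, add_zero] at hq
  refine le_trans ?_ (kinfDual_le_Kinfstar S.pos S.sum_eq_one
    (fun j => (hhalf j).trans_lt (by norm_num)) hq)
  have hterm (j : Fin (m + 1)) : 0 ≤ p j * log (2 * (1 - l * (f j - u))) :=
    mul_nonneg (S.pos j).le (log_nonneg (by linarith [hhalf j]))
  have hleft : u / (2 * (b - u)) ≤ 2 * (1 - l * (f i₀ - u)) := by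
    rw [S.apply_left, show u / (2 * (b - u)) = l * u by rw [hl]; ring]
    linarith [mul_pos hl0 hu0]
  have hdual : kinfDual p f u l = ∑ j, p j * log (2 * (1 - l * (f j - u))) - log 2 := by
    have hlog (j : Fin (m + 1)) : log (2 * (1 - l * (f j - u))) = log 2 + log (1 - l * (f j - u)) :=
      log_mul two_ne_zero (by linarith [hhalf j])
    simp only [hlog, mul_add, Finset.sum_add_distrib, ← Finset.sum_mul, S.sum_eq_one, one_mul,
      add_sub_cancel_left, kinfDual]
  rw [hdual]
  gcongr
  refine le_trans ?_ (Finset.single_le_sum (fun j _ => hterm j) (Finset.mem_univ i₀))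
  exact mul_le_mul_of_nonneg_left (log_le_log (by positivity) hleft) (S.pos i₀).le

lemma tendsto_Kinfstar_atTop (S : SpansInterval p f b i₀ i₁) :
    Tendsto (fun u => Kinfstar p u f) (𝓝[<] b) atTop := by
  have hle : ∀ᶠ u in 𝓝[<] b, p i₀ * log (u / (2 * (b - u))) - log 2 ≤ Kinfstar p u f := by
    filter_upwards [Ioo_mem_nhdsLT S.mean_lt] with u hu
    exact le_Kinfstar_of_lt_right S hu.1.le hu.2
  have hgap : Tendsto (fun u => 2 * (b - u)) (𝓝[<] b) (𝓝[>] 0) := by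
    refine tendsto_nhdsWithin_iff.2 ⟨?_, ?_⟩
    · have hcont : Continuous fun u => 2 * (b - u) := by fun_prop
      simpa only [sub_self, mul_zero] using (hcont.tendsto b).mono_left nhdsWithin_le_nhds
    · filter_upwards [self_mem_nhdsWithin] with u hu
      exact mem_Ioi.2 (mul_pos two_pos (sub_pos.2 (mem_Iio.1 hu)))
  have hratio : Tendsto (fun u => u / (2 * (b - u))) (𝓝[<] b) atTop :=
    (tendsto_id.mono_left nhdsWithin_le_nhds).pos_mul_atTop S.right_pos hgap.inv_tendsto_nhdsGT_zero
  refine tendsto_atTop_mono' _ hle (tendsto_atTop_add_const_right _ _ ?_)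
  exact (tendsto_log_atTop.comp hratio).const_mul_atTop (S.pos i₀)

end Kinfstar

/-! ### The Gaussian tail -/

/-- The upper tail `P(ζ ≥ x)` of a standard Gaussian variable `ζ`. -/
def gaussianTail (x : ℝ) : ℝ := (gaussianReal 0 1).real (Ici x)

lemma gaussianTail_eq_one_sub_cdf (x : ℝ) : gaussianTail x = 1 - cdf (gaussianReal 0 1) x := by
  have : NullSingletonClass (gaussianReal 0 1) := nullSingletonClass_gaussianReal one_ne_zero
  rw [cdf_eq_real, gaussianTail, measureReal_congr Ioi_ae_eq_Ici.symm, ← compl_Iic,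
    probReal_compl_eq_one_sub measurableSet_Iic]

lemma gaussianTail_nonneg (x : ℝ) : 0 ≤ gaussianTail x := measureReal_nonneg

lemma gaussianTail_le_one (x : ℝ) : gaussianTail x ≤ 1 := measureReal_le_one

lemma antitone_gaussianTail : Antitone gaussianTail := fun _ _ h =>
  measureReal_mono (Ici_subset_Ici.2 h)

lemma tendsto_gaussianTail_atTop : Tendsto gaussianTail atTop (𝓝 0) := by
  have hcdf := (tendsto_cdf_atTop (gaussianReal 0 1)).const_sub 1
  rw [sub_self] at hcdf
  exact hcdf.congr fun x => (gaussianTail_eq_one_sub_cdf x).symm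

lemma tendsto_gaussianTail_atBot : Tendsto gaussianTail atBot (𝓝 1) := by
  have hcdf := (tendsto_cdf_atBot (gaussianReal 0 1)).const_sub 1
  rw [sub_zero] at hcdf
  exact hcdf.congr fun x => (gaussianTail_eq_one_sub_cdf x).symm

lemma gaussianTail_neg (x : ℝ) : gaussianTail (-x) = 1 - gaussianTail x := by
  have hsymm : (gaussianReal 0 1).map Neg.neg = gaussianReal 0 1 := by
    rw [gaussianReal_map_neg, neg_zero]
  rw [gaussianTail_eq_one_sub_cdf x, sub_sub_cancel, gaussianTail, cdf_eq_real]
  conv_lhs => rw [← hsymm]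
  rw [map_measureReal_apply measurable_neg measurableSet_Ici, neg_preimage, neg_Ici, neg_neg]

lemma gaussianTail_zero : gaussianTail 0 = 1 / 2 := by
  have hzero := gaussianTail_neg 0
  rw [neg_zero] at hzero
  linarith

lemma continuous_gaussianPDFReal (v : ℝ≥0) : Continuous (gaussianPDFReal 0 v) := by
  unfold gaussianPDFReal
  fun_prop

lemma hasDerivAt_gaussianTail (x : ℝ) : HasDerivAt gaussianTail (-gaussianPDFReal 0 1 x) x := by
  have hcont := continuous_gaussianPDFReal 1
  have hint := integrable_gaussianPDFReal 0 1
  have htail (y : ℝ) : gaussianTail y = 1 - ∫ t in Iic y, gaussianPDFReal 0 1 t := by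
    rw [gaussianTail_eq_one_sub_cdf, cdf_eq_real, measureReal_def,
      gaussianReal_apply_eq_integral _ one_ne_zero,
      ENNReal.toReal_ofReal (integral_nonneg fun t => gaussianPDFReal_nonneg 0 1 t)]
  have hprimitive : gaussianTail
      = fun y => gaussianTail 0 - ∫ t in (0 : ℝ)..y, gaussianPDFReal 0 1 t := by
    ext y
    rw [htail y, htail 0,
      ← intervalIntegral.integral_Iic_sub_Iic hint.integrableOn hint.integrableOn]
    ring
  rw [hprimitive]
  exact (intervalIntegral.integral_hasDerivAt_right (hcont.intervalIntegrable _ _)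
    hcont.stronglyMeasurable.stronglyMeasurableAtFilter hcont.continuousAt).const_sub _

lemma continuous_gaussianTail : Continuous gaussianTail :=
  continuous_iff_continuousAt.2 fun x => (hasDerivAt_gaussianTail x).continuousAt

lemma gaussianPDFReal_eq_inv_mul_div_sqrt (v : ℝ≥0) (x : ℝ) :
    gaussianPDFReal 0 v x = (√v)⁻¹ * gaussianPDFReal 0 1 (x / √v) := by
  have hexp : -(x / √v) ^ 2 / 2 = -x ^ 2 / (2 * v) := by
    rw [div_pow, sq_sqrt v.coe_nonneg]
    ring
  simp only [gaussianPDFReal, NNReal.coe_one, mul_one, sub_zero, hexp, sqrt_mul' _ v.coe_nonneg,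
    mul_inv]
  ring

lemma intervalIntegral_gaussianPDFReal_sub_mul {v : ℝ≥0} (hv : v ≠ 0) {s : ℝ} (hs : s ≠ 0)
    (y a b : ℝ) :
    ∫ u in a..b, gaussianPDFReal 0 v (y - u * s)
      = s⁻¹ * (gaussianTail ((y - b * s) / √v) - gaussianTail ((y - a * s) / √v)) := by
  have hderiv (u : ℝ) (_ : u ∈ uIcc a b) :
      HasDerivAt (fun u => s⁻¹ * gaussianTail ((y - u * s) / √v))
        (gaussianPDFReal 0 v (y - u * s)) u := by
    have hinner : HasDerivAt (fun u => (y - u * s) / √v) (-(1 * s) / √v) u :=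
      (((hasDerivAt_id' u).mul_const s).const_sub y).div_const √v
    refine (((hasDerivAt_gaussianTail _).comp u hinner).const_mul s⁻¹).congr_deriv ?_
    rw [gaussianPDFReal_eq_inv_mul_div_sqrt v]
    field_simp
  rw [intervalIntegral.integral_eq_sub_of_hasDerivAt hderiv
    (((continuous_gaussianPDFReal v).comp (by fun_prop)).intervalIntegrable _ _), mul_sub]

/-! ### Dirichlet vectors as normalised Gamma vectors -/

section GammaDensity

variable {ι : Type*} [Fintype ι] {α : ι → ℝ}

lemma gammaPDF_prod (hα : ∀ j, 0 < α j) (x : ι → ℝ) :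
    ∏ j, gammaPDF (α j) 1 (x j) = ENNReal.ofReal (∏ j, gammaPDFReal (α j) 1 (x j)) :=
  (ENNReal.ofReal_prod_of_nonneg fun j _ => gammaPDFReal_nonneg (hα j) one_pos _).symm

lemma integrable_gammaPDFReal {a r : ℝ} (ha : 0 < a) (hr : 0 < r) :
    Integrable (gammaPDFReal a r) := by
  refine ⟨(measurable_gammaPDFReal a r).aestronglyMeasurable, ?_⟩
  rw [hasFiniteIntegral_iff_ofReal (Eventually.of_forall (gammaPDFReal_nonneg ha hr))]
  exact (lintegral_gammaPDF_eq_one ha hr).trans_lt ENNReal.one_lt_top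

lemma piGamma_eq_withDensity (hα : ∀ j, 0 < α j) :
    piGamma α = volume.withDensity fun x => ∏ j, gammaPDF (α j) 1 (x j) := by
  have hprob (j : ι) : IsProbabilityMeasure (gammaMeasure (α j) 1) :=
    isProbabilityMeasure_gammaMeasure (hα j) one_pos
  have hint (j : ι) := integrable_gammaPDFReal (hα j) one_pos
  have hnonneg (j : ι) : 0 ≤ gammaPDFReal (α j) 1 := gammaPDFReal_nonneg (hα j) one_pos
  refine Measure.pi_eq fun s hs => ?_
  simp only [gammaPDF_prod hα]
  rw [withDensity_apply _ (MeasurableSet.univ_pi hs), volume_pi, Measure.restrict_pi_pi,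
    ← ofReal_integral_eq_lintegral_ofReal
      (Integrable.fintype_prod fun j => (hint j).integrableOn)
      (Eventually.of_forall fun x => Finset.prod_nonneg fun j _ => hnonneg j _),
    integral_fintype_prod_eq_prod,
    ENNReal.ofReal_prod_of_nonneg fun j _ => integral_nonneg (hnonneg j)]
  refine Finset.prod_congr rfl fun j _ => ?_
  rw [gammaMeasure, withDensity_apply _ (hs j), ofReal_integral_eq_lintegral_ofReal
    (hint j).integrableOn (Eventually.of_forall (hnonneg j))]
  rfl

lemma ae_pos_piGamma (hα : ∀ j, 0 < α j) : ∀ᵐ x ∂piGamma α, ∀ j, 0 < x j := by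
  have hprob (j : ι) : IsProbabilityMeasure (gammaMeasure (α j) 1) :=
    isProbabilityMeasure_gammaMeasure (hα j) one_pos
  exact ae_all_iff.2 fun j =>
    (measurePreserving_eval (fun j => gammaMeasure (α j) 1) j).quasiMeasurePreserving.ae
      (ae_pos_gammaMeasure (α j) 1)

lemma ae_sum_mul_ne_zero_piGamma (hα : ∀ j, 0 < α j) {c : ι → ℝ} (hc : c ≠ 0) :
    ∀ᵐ x ∂piGamma α, ∑ j, x j * c j ≠ 0 := by
  classical
  rw [piGamma_eq_withDensity hα]
  refine (withDensity_absolutelyContinuous _ _).ae_le (ae_iff.2 ?_)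
  have hker : LinearMap.ker (Fintype.linearCombination ℝ c) ≠ ⊤ := fun htop => hc <| by
    rw [LinearMap.ker_eq_top] at htop
    ext j
    simpa only [Fintype.linearCombination_apply_single, one_smul, LinearMap.zero_apply,
      Pi.zero_apply] using
      LinearMap.congr_fun htop (Pi.single j 1)
  simpa only [not_not] using! Measure.addHaar_submodule volume _ hker

lemma prod_gammaPDFReal_of_neg {x : ι → ℝ} (i : ι) (hi : x i < 0) :
    ∏ j, gammaPDFReal (α j) 1 (x j) = 0 :=
  Finset.prod_eq_zero (Finset.mem_univ i) (if_neg hi.not_ge)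

lemma prod_gammaPDFReal_mul {s : ℝ} {y : ι → ℝ} (hs : 0 < s) (hy : ∀ j, 0 ≤ y j)
    (hy1 : ∑ j, y j = 1) :
    ∏ j, gammaPDFReal (α j) 1 (s * y j)
      = (∏ j, Gamma (α j))⁻¹ * (s ^ (∑ j, (α j - 1)) * exp (-s)) * ∏ j, y j ^ (α j - 1) := by
  have hterm (j : ι) : gammaPDFReal (α j) 1 (s * y j)
      = (Gamma (α j))⁻¹ * (s ^ (α j - 1) * exp (-(s * y j))) * y j ^ (α j - 1) := by
    rw [gammaPDFReal, if_pos (mul_nonneg hs.le (hy j)), mul_rpow hs.le (hy j), one_rpow, one_mul,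
      one_div]
    ring
  simp only [hterm, Finset.prod_mul_distrib, Finset.prod_inv_distrib, ← rpow_sum_of_pos hs,
    ← exp_sum, Finset.sum_neg_distrib, ← Finset.mul_sum, hy1, mul_one]

end GammaDensity

section Dirichlet

variable {m : ℕ} {α : Fin (m + 1) → ℝ}

/-- The parametrisation of the simplex used in `dirichlet`: it appends the missing coordinate. -/
def simplexLift (w : Fin m → ℝ) : Fin (m + 1) → ℝ := Fin.snoc w (1 - ∑ i, w i)

lemma continuous_simplexLift : Continuous (simplexLift (m := m)) := by
  unfold simplexLift
  fun_prop

lemma sum_simplexLift (w : Fin m → ℝ) : ∑ j, simplexLift w j = 1 := by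
  simp only [simplexLift, Fin.sum_univ_castSucc, Fin.snoc_castSucc, Fin.snoc_last, add_sub_cancel]

lemma dirichletDensity_eq_ite (α : Fin (m + 1) → ℝ) (w : Fin m → ℝ) :
    dirichletDensity m α w
      = if ∀ j, 0 ≤ simplexLift w j then ∏ j, simplexLift w j ^ (α j - 1) else 0 := by
  simp only [dirichletDensity, indicator_apply, mem_ofPred_eq, simplexLift, Fin.forall_fin_succ',
    Fin.prod_univ_castSucc, Fin.snoc_castSucc, Fin.snoc_last, sub_nonneg]

lemma abs_pow_mul_prod_gammaPDFReal (hα : 0 < ∑ j, α j) {s : ℝ} (hs : s ≠ 0) (w : Fin m → ℝ) :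
    |s| ^ m * ∏ j, gammaPDFReal (α j) 1 (s * simplexLift w j)
      = Gamma (∑ j, α j) / (∏ j, Gamma (α j)) * gammaPDFReal (∑ j, α j) 1 s
        * dirichletDensity m α w := by
  have hΓ := (Gamma_pos_of_pos hα).ne'
  rw [dirichletDensity_eq_ite]
  rcases hs.lt_or_gt with hs | hs
  · obtain ⟨j, hj⟩ : ∃ j, 0 < simplexLift w j := by
      by_contra! hle
      linarith [Fintype.sum_nonpos hle, sum_simplexLift w]
    rw [prod_gammaPDFReal_of_neg j (mul_neg_of_neg_of_pos hs hj), gammaPDFReal, if_neg hs.not_ge]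
    ring
  split_ifs with hw
  · have hpow : s ^ (∑ j, α j - 1) = s ^ m * s ^ (∑ j, (α j - 1)) := by
      rw [← rpow_natCast, ← rpow_add hs]
      congr 1
      simp only [Finset.sum_sub_distrib, Finset.sum_const, Finset.card_univ, Fintype.card_fin,
        nsmul_eq_mul]
      push_cast
      ring
    rw [prod_gammaPDFReal_mul hs hw (sum_simplexLift w), gammaPDFReal, if_pos hs.le, hpow,
      abs_of_pos hs, one_rpow, one_mul]
    field_simp
  · obtain ⟨j, hj⟩ := not_forall.1 hw
    rw [prod_gammaPDFReal_of_neg j (mul_neg_of_pos_of_neg hs (not_le.1 hj)), mul_zero, mul_zero]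

lemma lintegral_eq_lintegral_fin_snoc {G : (Fin (m + 1) → ℝ) → ℝ≥0∞} (hG : Measurable G) :
    ∫⁻ x, G x = ∫⁻ v : Fin m → ℝ, ∫⁻ y : ℝ, G (Fin.snoc v y) := by
  have hequiv := (volume_preserving_piFinSuccAbove (fun _ : Fin (m + 1) => ℝ) (Fin.last m)).symm
  have hsnoc (z : ℝ × (Fin m → ℝ)) :
      (MeasurableEquiv.piFinSuccAbove (fun _ : Fin (m + 1) => ℝ) (Fin.last m)).symm z
        = Fin.snoc z.2 z.1 := Fin.insertNth_last' _ _
  have hmeas : Measurable fun z : ℝ × (Fin m → ℝ) => G (Fin.snoc z.2 z.1) :=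
    hG.comp (Continuous.measurable (by fun_prop))
  rw [← hequiv.lintegral_comp_emb (MeasurableEquiv.measurableEmbedding _)]
  simp only [hsnoc]
  exact lintegral_prod_symm' _ hmeas

lemma lintegral_eq_abs_pow_mul_lintegral_smul {s : ℝ} (hs : s ≠ 0) (g : (Fin m → ℝ) → ℝ≥0∞) :
    ∫⁻ v, g v = ENNReal.ofReal (|s| ^ m) * ∫⁻ w, g (s • w) := by
  have hpow : 0 < |s ^ m| := abs_pos.2 (pow_ne_zero m hs)
  rw [← (measurableEmbedding_const_smul₀ hs).lintegral_map, Measure.map_addHaar_smul _ hs,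
    lintegral_smul_measure, Module.finrank_fin_fun, smul_eq_mul, ← mul_assoc, ← abs_pow, abs_inv,
    ← ENNReal.ofReal_mul hpow.le, mul_inv_cancel₀ hpow.ne', ENNReal.ofReal_one, one_mul]

lemma lintegral_eq_lintegral_smul_simplexLift {G : (Fin (m + 1) → ℝ) → ℝ≥0∞} (hG : Measurable G) :
    ∫⁻ x, G x
      = ∫⁻ s : ℝ, ENNReal.ofReal (|s| ^ m) * ∫⁻ w : Fin m → ℝ, G (s • simplexLift w) := by
  have hmeas : Measurable fun z : (Fin m → ℝ) × ℝ => G (Fin.snoc z.1 (z.2 - ∑ i, z.1 i)) :=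
    hG.comp (Continuous.measurable (by fun_prop))
  have hshift (v : Fin m → ℝ) :
      ∫⁻ y : ℝ, G (Fin.snoc v y) = ∫⁻ s : ℝ, G (Fin.snoc v (s - ∑ i, v i)) :=
    (lintegral_sub_right_eq_self (fun y : ℝ => G (Fin.snoc v y)) (∑ i, v i)).symm
  simp only [lintegral_eq_lintegral_fin_snoc hG, hshift]
  rw [lintegral_lintegral_swap hmeas.aemeasurable]
  refine lintegral_congr_ae ?_
  filter_upwards [Measure.ae_ne volume (0 : ℝ)] with s hs
  rw [lintegral_eq_abs_pow_mul_lintegral_smul hs]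
  congr! with w
  ext j
  refine Fin.lastCases ?_ (fun i => ?_) j
  · simp only [simplexLift, Fin.snoc_last, Pi.smul_apply, smul_eq_mul, ← Finset.mul_sum, mul_sub,
      mul_one]
  · simp only [simplexLift, Fin.snoc_castSucc, Pi.smul_apply, smul_eq_mul]

lemma measurable_dirichletDensity : Measurable (dirichletDensity m α) := by
  simp only [funext (dirichletDensity_eq_ite α)]
  have := continuous_simplexLift (m := m)
  refine Measurable.ite ?_ (by fun_prop) measurable_const
  simp only [ofPred_forall]
  exact MeasurableSet.iInter fun j => measurableSet_le measurable_const (by fun_prop)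

lemma lintegral_prod_gammaPDF_smul_simplexLift (hα : ∀ j, 0 < α j)
    {F : (Fin (m + 1) → ℝ) → ℝ≥0∞} (hF : Measurable F) {s : ℝ} (hs : s ≠ 0) :
    ENNReal.ofReal (|s| ^ m)
        * ∫⁻ w, (∏ j, gammaPDF (α j) 1 (s * simplexLift w j)) * F (simplexLift w)
      = ENNReal.ofReal (Gamma (∑ j, α j) / ∏ j, Gamma (α j)) * gammaPDF (∑ j, α j) 1 s
        * ∫⁻ w, F (simplexLift w) ∂dirichletBase m α := by
  have hA : 0 < ∑ j, α j := Finset.sum_pos (fun j _ => hα j) Finset.univ_nonempty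
  have hΓ : 0 ≤ Gamma (∑ j, α j) / ∏ j, Gamma (α j) :=
    div_nonneg (Gamma_nonneg_of_nonneg hA.le)
      (Finset.prod_nonneg fun j _ => Gamma_nonneg_of_nonneg (hα j).le)
  have hFlift : Measurable fun w => F (simplexLift w) := hF.comp continuous_simplexLift.measurable
  have hdens : Measurable fun w => ENNReal.ofReal (dirichletDensity m α w) :=
    measurable_dirichletDensity.ennreal_ofReal
  rw [dirichletBase, lintegral_withDensity_eq_lintegral_mul _ hdens hFlift,
    ← lintegral_const_mul' _ _ ENNReal.ofReal_ne_top,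
    ← lintegral_const_mul _ (hdens.mul hFlift)]
  refine lintegral_congr fun w => ?_
  rw [gammaPDF_prod hα, ← mul_assoc, ← ENNReal.ofReal_mul (by positivity),
    abs_pow_mul_prod_gammaPDFReal hA hs,
    ENNReal.ofReal_mul (mul_nonneg hΓ (gammaPDFReal_nonneg hA one_pos s)), ENNReal.ofReal_mul hΓ]
  exact mul_assoc _ _ _

lemma lintegral_piGamma_eq_mul_lintegral_dirichletBase (hα : ∀ j, 0 < α j)
    {F : (Fin (m + 1) → ℝ) → ℝ≥0∞} (hF : Measurable F) {k : ℝ → ℝ≥0∞} (hk : Measurable k) :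
    ∫⁻ x, F ((∑ j, x j)⁻¹ • x) * k (∑ j, x j) ∂piGamma α
      = ENNReal.ofReal (Gamma (∑ j, α j) / ∏ j, Gamma (α j))
        * (∫⁻ s, k s ∂gammaMeasure (∑ j, α j) 1)
        * ∫⁻ w, F (simplexLift w) ∂dirichletBase m α := by
  have hpdf (a : ℝ) : Measurable (gammaPDF a 1) := (measurable_gammaPDFReal a 1).ennreal_ofReal
  have hprod : Measurable fun x : Fin (m + 1) → ℝ => ∏ j, gammaPDF (α j) 1 (x j) := by fun_prop
  have hFk : Measurable fun x : Fin (m + 1) → ℝ => F ((∑ j, x j)⁻¹ • x) * k (∑ j, x j) :=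
    (hF.comp (by fun_prop)).mul (hk.comp (by fun_prop))
  rw [piGamma_eq_withDensity hα, lintegral_withDensity_eq_lintegral_mul _ hprod hFk,
    lintegral_eq_lintegral_smul_simplexLift (hprod.mul hFk), gammaMeasure,
    lintegral_withDensity_eq_lintegral_mul _ (hpdf _) hk,
    ← lintegral_const_mul _ ((hpdf _).mul hk),
    ← lintegral_mul_const _ (((hpdf _).mul hk).const_mul _)]
  refine lintegral_congr_ae ?_
  filter_upwards [Measure.ae_ne volume (0 : ℝ)] with s hs
  have hsum (w : Fin m → ℝ) : ∑ j, s * simplexLift w j = s := by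
    simp only [← Finset.mul_sum, sum_simplexLift, mul_one]
  have hmeas : Measurable fun w : Fin m → ℝ =>
      (∏ j, gammaPDF (α j) 1 (s * simplexLift w j)) * F (simplexLift w) :=
    (hprod.comp (continuous_simplexLift.const_smul s).measurable).mul
      (hF.comp continuous_simplexLift.measurable)
  simp only [Pi.mul_apply, Pi.smul_apply, smul_eq_mul, hsum, inv_smul_smul₀ hs, ← mul_assoc]
  rw [lintegral_mul_const _ hmeas, ← mul_assoc, lintegral_prod_gammaPDF_smul_simplexLift hα hF hs]
  ring

lemma dirichletBase_univ_mul (hα : ∀ j, 0 < α j) :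
    ENNReal.ofReal (Gamma (∑ j, α j) / ∏ j, Gamma (α j)) * dirichletBase m α univ = 1 := by
  have hA : 0 < ∑ j, α j := Finset.sum_pos (fun j _ => hα j) Finset.univ_nonempty
  have := isProbabilityMeasure_piGamma hα
  have := isProbabilityMeasure_gammaMeasure hA one_pos
  have hone := lintegral_piGamma_eq_mul_lintegral_dirichletBase hα
    (measurable_const (a := (1 : ℝ≥0∞))) (measurable_const (a := (1 : ℝ≥0∞)))
  simpa only [mul_one, lintegral_const, measure_univ, one_mul] using hone.symm

lemma lintegral_dirichlet (hα : ∀ j, 0 < α j) {F : (Fin (m + 1) → ℝ) → ℝ≥0∞} (hF : Measurable F) :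
    ∫⁻ w, F w ∂dirichlet m α
      = ENNReal.ofReal (Gamma (∑ j, α j) / ∏ j, Gamma (α j))
        * ∫⁻ w, F (simplexLift w) ∂dirichletBase m α := by
  have hmap : dirichlet m α
      = ((dirichletBase m α univ)⁻¹ • dirichletBase m α).map simplexLift := rfl
  rw [hmap, lintegral_map hF continuous_simplexLift.measurable, lintegral_smul_measure,
    ← ENNReal.eq_inv_of_mul_eq_one_left (dirichletBase_univ_mul hα),
    smul_eq_mul]

/- The normalisation of a vector of independent Gamma variables is a Dirichlet vector, and it is
independent of their sum. -/
lemma lintegral_piGamma (hα : ∀ j, 0 < α j) {F : (Fin (m + 1) → ℝ) → ℝ≥0∞} (hF : Measurable F)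
    {k : ℝ → ℝ≥0∞} (hk : Measurable k) :
    ∫⁻ x, F ((∑ j, x j)⁻¹ • x) * k (∑ j, x j) ∂piGamma α
      = (∫⁻ s, k s ∂gammaMeasure (∑ j, α j) 1) * ∫⁻ w, F w ∂dirichlet m α := by
  rw [lintegral_piGamma_eq_mul_lintegral_dirichletBase hα hF hk, lintegral_dirichlet hα hF]
  ring

lemma map_piGamma_eq_dirichlet (hα : ∀ j, 0 < α j) :
    (piGamma α).map (fun x => (∑ j, x j)⁻¹ • x) = dirichlet m α := by
  have := isProbabilityMeasure_gammaMeasure (a := ∑ j, α j) (r := 1)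
    (Finset.sum_pos (fun j _ => hα j) Finset.univ_nonempty) one_pos
  refine Measure.ext_of_lintegral _ fun F hF => ?_
  rw [lintegral_map hF (by fun_prop)]
  simpa only [mul_one, lintegral_one, measure_univ, one_mul] using
    lintegral_piGamma hα hF (measurable_const (a := (1 : ℝ≥0∞)))

lemma isProbabilityMeasure_dirichlet (hα : ∀ j, 0 < α j) :
    IsProbabilityMeasure (dirichlet m α) := by
  have := isProbabilityMeasure_piGamma hα
  rw [← map_piGamma_eq_dirichlet hα]
  exact Measure.isProbabilityMeasure_map (by fun_prop)

end Dirichlet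

/-! ### The density of a Dirichlet weighted sum -/

lemma ae_sum_pos_piGamma {ι : Type*} [Fintype ι] [Nonempty ι] {α : ι → ℝ} (hα : ∀ j, 0 < α j) :
    ∀ᵐ x ∂piGamma α, 0 < ∑ j, x j :=
  (ae_pos_piGamma hα).mono fun _ hx => Finset.sum_pos (fun j _ => hx j) Finset.univ_nonempty

section InverseSum

variable {m : ℕ} {α f : Fin (m + 1) → ℝ} {μ : ℝ}

lemma lintegral_inv_gammaMeasure {a : ℝ} (ha : 1 < a) :
    ∫⁻ s, ENNReal.ofReal s⁻¹ ∂gammaMeasure a 1 = ENNReal.ofReal (a - 1)⁻¹ := by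
  have ha1 : 0 < a - 1 := sub_pos.2 ha
  have hΓ : Gamma (a - 1) / Gamma a = (a - 1)⁻¹ := by
    have hstep := Gamma_add_one ha1.ne'
    rw [sub_add_cancel] at hstep
    rw [hstep, div_mul_cancel_right₀ (Gamma_pos_of_pos ha1).ne']
  have hmoment := lintegral_rpow_gammaMeasure (zero_lt_one.trans ha) (p := -1) (by linarith)
  simpa only [rpow_neg_one, ← sub_eq_add_neg, hΓ] using hmoment

lemma integrable_inv_sum_piGamma (hα : ∀ j, 0 < α j) (hA : 1 < ∑ j, α j) :
    Integrable (fun x => (∑ j, x j)⁻¹) (piGamma α) := by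
  refine ⟨Measurable.aestronglyMeasurable (by fun_prop), ?_⟩
  rw [hasFiniteIntegral_iff_ofReal ((ae_sum_pos_piGamma hα).mono fun x hx => (inv_pos.2 hx).le)]
  have := isProbabilityMeasure_dirichlet hα
  have hinv := lintegral_piGamma hα (measurable_const (a := (1 : ℝ≥0∞)))
    (k := fun s => ENNReal.ofReal s⁻¹) (by fun_prop)
  simp only [one_mul, lintegral_inv_gammaMeasure hA, lintegral_one, measure_univ, mul_one] at hinv
  exact hinv.trans_lt ENNReal.ofReal_lt_top

lemma setIntegral_inv_sum_piGamma (hα : ∀ j, 0 < α j) (hA : 1 < ∑ j, α j)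
    {T : Set (Fin (m + 1) → ℝ)} (hT : MeasurableSet T) :
    ∫ x in {x | (∑ j, x j)⁻¹ • x ∈ T}, (∑ j, x j)⁻¹ ∂piGamma α
      = (∑ j, α j - 1)⁻¹ * (dirichlet m α).real T := by
  have hS : MeasurableSet {x : Fin (m + 1) → ℝ | (∑ j, x j)⁻¹ • x ∈ T} :=
    measurableSet_preimage (by fun_prop) hT
  have hsplit := lintegral_piGamma hα (measurable_one.indicator hT)
    (k := fun s => ENNReal.ofReal s⁻¹) (by fun_prop)
  rw [lintegral_inv_gammaMeasure hA, lintegral_indicator_one hT] at hsplit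
  rw [integral_eq_lintegral_of_nonneg_ae
      (ae_restrict_of_ae ((ae_sum_pos_piGamma hα).mono fun x hx => (inv_pos.2 hx).le))
      (Measurable.aestronglyMeasurable (by fun_prop)), ← lintegral_indicator hS,
    measureReal_def, ← ENNReal.toReal_ofReal (inv_nonneg.2 (sub_nonneg.2 hA.le)),
    ← ENNReal.toReal_mul, ← hsplit]
  congr! 3 with x
  classical
  simp only [indicator_apply, mem_ofPred_eq, Pi.one_apply, ite_mul, one_mul, zero_mul]

lemma setIntegral_inv_sum_piGamma_halfSpace (hα : ∀ j, 0 < α j) (hA : 1 < ∑ j, α j) :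
    ∫ x in {x | μ * ∑ j, x j ≤ ∑ j, f j * x j}, (∑ j, x j)⁻¹ ∂piGamma α
      = (∑ j, α j - 1)⁻¹ * (dirichlet m α).real {w | μ ≤ ∑ j, f j * w j} := by
  rw [← setIntegral_inv_sum_piGamma hα hA (measurableSet_le measurable_const (by fun_prop))]
  refine setIntegral_congr_set ?_
  filter_upwards [ae_sum_pos_piGamma hα] with x hx
  refine propext (?_ : μ * ∑ j, x j ≤ ∑ j, f j * x j ↔ μ ≤ ∑ j, f j * ((∑ j, x j)⁻¹ * x j))
  simp only [mul_left_comm _ (∑ j, x j)⁻¹, ← Finset.mul_sum]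
  rw [le_inv_mul_iff₀ hx, mul_comm]

end InverseSum

section SmoothedDensity

variable {ι : Type*} [Fintype ι] {α f : ι → ℝ} {b μ : ℝ} {i₀ i₁ : ι}

lemma modulus_le_inv_one_add_sq (hα : ∀ j, 0 < α j) {c : ι → ℝ} {r : ℝ} {i : ι} (hi : 2 ≤ α i)
    (hr : r ^ 2 ≤ c i ^ 2) (s : ℝ) : modulus α c s ≤ (1 + (s * r) ^ 2)⁻¹ := by
  have hlog0 (j : ι) : 0 ≤ log (1 + (s * c j) ^ 2) :=
    log_nonneg (le_add_of_nonneg_right (sq_nonneg _))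
  have hlog : log (1 + (s * r) ^ 2) ≤ log (1 + (s * c i) ^ 2) := by
    rw [mul_pow, mul_pow]
    gcongr
  have hsingle : α i * log (1 + (s * c i) ^ 2) ≤ ∑ j, α j * log (1 + (s * c j) ^ 2) :=
    Finset.single_le_sum (f := fun j => α j * log (1 + (s * c j) ^ 2))
      (fun j _ => mul_nonneg (hα j).le (hlog0 j)) (Finset.mem_univ i)
  rw [← exp_log (inv_pos.2 (by positivity : 0 < 1 + (s * r) ^ 2)), log_inv, modulus, exp_le_exp]
  nlinarith [mul_le_mul_of_nonneg_right hi (hlog0 i)]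

lemma modulus_sub_le (hα : ∀ j, 0 < α j) (hb : 0 ≤ b) (hf₀ : f i₀ = 0) (hf₁ : f i₁ = b)
    (h₀ : 2 ≤ α i₀) (h₁ : 2 ≤ α i₁) (u s : ℝ) :
    modulus α (fun j => f j - u) s ≤ (1 + (s * (b / 2)) ^ 2)⁻¹ := by
  rcases le_total u (b / 2) with hu | hu
  · exact modulus_le_inv_one_add_sq hα h₁ (by rw [hf₁]; nlinarith) s
  · exact modulus_le_inv_one_add_sq hα h₀ (by rw [hf₀]; nlinarith) s

lemma smoothedDensity_sub_le (hα : ∀ j, 0 < α j) (hb : 0 < b) (hf₀ : f i₀ = 0) (hf₁ : f i₁ = b)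
    (h₀ : 2 ≤ α i₀) (h₁ : 2 ≤ α i₁) (u : ℝ) {v : ℝ≥0} (hv : v ≠ 0) :
    smoothedDensity α (fun j => f j - u) v
      ≤ (2 * π)⁻¹ * ∫ s : ℝ, (1 + (s * (b / 2)) ^ 2)⁻¹ := by
  have hle := modulus_sub_le hα hb.le hf₀ hf₁ h₀ h₁ u
  have hbound : Integrable fun s : ℝ => (1 + (s * (b / 2)) ^ 2)⁻¹ :=
    integrable_inv_one_add_sq.comp_mul_right' (by positivity)
  have hint : Integrable (modulus α fun j => f j - u) :=
    hbound.mono' (continuous_modulus _ _).aestronglyMeasurable (.of_forall fun s => by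
      rw [norm_of_nonneg (modulus_pos _ _ _).le]
      exact hle s)
  exact (smoothedDensity_le hα hint hv).trans
    (mul_le_mul_of_nonneg_left (integral_mono hint hbound hle) (by positivity))

lemma smoothedDensity_nonneg (α c : ι → ℝ) (v : ℝ≥0) : 0 ≤ smoothedDensity α c v :=
  integral_nonneg fun _ => gaussianPDFReal_nonneg 0 v _

lemma sum_sub_const_mul (f x : ι → ℝ) (u : ℝ) :
    ∑ j, (f j - u) * x j = ∑ j, f j * x j - u * ∑ j, x j := by
  simp only [sub_mul, Finset.sum_sub_distrib, Finset.mul_sum]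

lemma continuous_gaussianPDFReal_sum_sub_mul (f : ι → ℝ) (v : ℝ≥0) :
    Continuous fun z : ℝ × (ι → ℝ) => gaussianPDFReal 0 v (∑ j, (f j - z.1) * z.2 j) :=
  (continuous_gaussianPDFReal v).comp (by fun_prop)

lemma stronglyMeasurable_smoothedDensity_sub (hα : ∀ j, 0 < α j) (v : ℝ≥0) :
    StronglyMeasurable fun u => smoothedDensity α (fun j => f j - u) v := by
  have := isProbabilityMeasure_piGamma hα
  exact (continuous_gaussianPDFReal_sum_sub_mul f v).stronglyMeasurable.integral_prod_right

lemma gaussianPDFReal_le (v : ℝ≥0) (x : ℝ) : gaussianPDFReal 0 v x ≤ (√(2 * π * v))⁻¹ :=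
  mul_le_of_le_one_right (by positivity)
    (exp_le_one_iff.2 (div_nonpos_of_nonpos_of_nonneg (neg_nonpos.2 (sq_nonneg _)) (by positivity)))

lemma intervalIntegral_smoothedDensity_sub [Nonempty ι] (hα : ∀ j, 0 < α j) {v : ℝ≥0}
    (hv : v ≠ 0) :
    ∫ u in μ..b, smoothedDensity α (fun j => f j - u) v
      = ∫ x, (∑ j, x j)⁻¹ * (gaussianTail ((∑ j, (f j - b) * x j) / √v)
          - gaussianTail ((∑ j, (f j - μ) * x j) / √v)) ∂piGamma α := by
  have := isProbabilityMeasure_piGamma hα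
  have : IsFiniteMeasure (volume.restrict (uIoc μ b)) := by
    rw [uIoc]
    infer_instance
  simp only [smoothedDensity]
  rw [intervalIntegral_integral_swap]
  · refine integral_congr_ae ?_
    filter_upwards [ae_sum_pos_piGamma hα] with x hx
    simp only [sum_sub_const_mul, intervalIntegral_gaussianPDFReal_sub_mul hv hx.ne']
  · refine (integrable_const (√(2 * π * v))⁻¹).mono'
      (continuous_gaussianPDFReal_sum_sub_mul f v).aestronglyMeasurable (.of_forall fun z => ?_)
    rw [Function.uncurry_def, norm_of_nonneg (gaussianPDFReal_nonneg 0 v _)]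
    exact gaussianPDFReal_le v _

lemma tendsto_div_sqrt_nhdsGT_zero {c : ℝ} (hc : 0 < c) :
    Tendsto (fun v : ℝ≥0 => c / √v) (𝓝[>] 0) atTop := by
  have hsqrt : Tendsto (fun v : ℝ≥0 => √(v : ℝ)) (𝓝[>] 0) (𝓝[>] 0) := by
    refine tendsto_nhdsWithin_iff.2 ⟨?_, ?_⟩
    · have hcont : Continuous fun v : ℝ≥0 => √(v : ℝ) := by fun_prop
      simpa only [NNReal.coe_zero, sqrt_zero] using (hcont.tendsto 0).mono_left nhdsWithin_le_nhds
    · filter_upwards [self_mem_nhdsWithin] with v hv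
      exact sqrt_pos.2 (NNReal.coe_pos.2 hv)
  exact (tendsto_inv_nhdsGT_zero.comp hsqrt).const_mul_atTop hc

lemma tendsto_gaussianTail_div_sqrt {c : ℝ} (hc : c ≠ 0) :
    Tendsto (fun v : ℝ≥0 => gaussianTail (c / √v)) (𝓝[>] 0) (𝓝 (if 0 ≤ c then 0 else 1)) := by
  rcases hc.lt_or_gt with hc | hc
  · rw [if_neg hc.not_ge]
    refine tendsto_gaussianTail_atBot.comp
      ((tendsto_neg_atTop_atBot.comp (tendsto_div_sqrt_nhdsGT_zero (neg_pos.2 hc))).congr ?_)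
    exact fun v => by rw [Function.comp_apply, neg_div, neg_neg]
  · rw [if_pos hc.le]
    exact tendsto_gaussianTail_atTop.comp (tendsto_div_sqrt_nhdsGT_zero hc)

end SmoothedDensity

section Density

variable {m : ℕ} {α f : Fin (m + 1) → ℝ} {b μ : ℝ} {i₀ i₁ : Fin (m + 1)}

lemma tendsto_intervalIntegral_smoothedDensity_sub (hα : ∀ j, 0 < α j) (hA : 1 < ∑ j, α j)
    (hfb : ∀ j, f j ≤ b) (hf : ∃ i, f i < b) (hfμ : ∃ i, f i ≠ μ) :
    Tendsto (fun v => ∫ u in μ..b, smoothedDensity α (fun j => f j - u) v) (𝓝[>] 0)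
      (𝓝 ((∑ j, α j - 1)⁻¹ * (dirichlet m α).real {w | μ ≤ ∑ j, f j * w j})) := by
  rw [← setIntegral_inv_sum_piGamma_halfSpace hα hA,
    ← integral_indicator (measurableSet_le (by fun_prop) (by fun_prop))]
  have hdiff (c : ℝ) (hc : ∃ i, f i ≠ c) : ∀ᵐ x ∂piGamma α, ∑ j, (f j - c) * x j ≠ 0 := by
    obtain ⟨i, hi⟩ := hc
    simp only [mul_comm (f _ - c)]
    exact ae_sum_mul_ne_zero_piGamma hα fun h => hi (sub_eq_zero.1 (congrFun h i))
  have hfubini := (eventually_mem_nhdsWithin (a := (0 : ℝ≥0))).mono fun v hv =>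
    (intervalIntegral_smoothedDensity_sub (f := f) (b := b) (μ := μ) hα (mem_Ioi.1 hv).ne').symm
  refine (tendsto_integral_filter_of_dominated_convergence (fun x => (∑ j, x j)⁻¹) ?_ ?_
    (integrable_inv_sum_piGamma hα hA) ?_).congr' hfubini
  · have := continuous_gaussianTail.measurable
    exact .of_forall fun v => Measurable.aestronglyMeasurable (by fun_prop)
  · refine .of_forall fun v => ?_
    filter_upwards [ae_sum_pos_piGamma hα] with x hx
    rw [norm_mul, norm_of_nonneg (inv_pos.2 hx).le, norm_eq_abs]
    exact mul_le_of_le_one_right (inv_pos.2 hx).le (abs_sub_le_of_nonneg_of_le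
      (gaussianTail_nonneg _) (gaussianTail_le_one _) (gaussianTail_nonneg _)
      (gaussianTail_le_one _))
  · filter_upwards [hdiff b (hf.imp fun _ => ne_of_lt), hdiff μ hfμ, ae_pos_piGamma hα]
      with x hxb hxμ hx
    have hneg : ¬ 0 ≤ ∑ j, (f j - b) * x j := fun h => hxb <| le_antisymm
      (Finset.sum_nonpos fun j _ => mul_nonpos_of_nonpos_of_nonneg (sub_nonpos.2 (hfb j)) (hx j).le)
      h
    have hlim := ((tendsto_gaussianTail_div_sqrt hxb).sub
      (tendsto_gaussianTail_div_sqrt hxμ)).const_mul (∑ j, x j)⁻¹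
    rw [if_neg hneg] at hlim
    convert hlim using 2
    simp only [sum_sub_const_mul, sub_nonneg, indicator_apply, mem_ofPred_eq]
    split_ifs <;> ring

theorem dirichlet_real_eq_integral (hα : ∀ j, 0 < α j) (h₀ : 2 ≤ α i₀) (h₁ : 2 ≤ α i₁)
    (hfb : ∀ j, f j ≤ b) (hf₀ : f i₀ = 0) (hf₁ : f i₁ = b) (hμ : 0 < μ) (hμb : μ < b)
    {h : ℝ → ℝ} (hlim : ∀ u ∈ Ioo μ b,
      Tendsto (smoothedDensity α fun j => f j - u) (𝓝[>] 0) (𝓝 (h u))) :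
    IntervalIntegrable h volume μ b ∧
      (dirichlet m α).real {w | μ ≤ ∑ j, f j * w j} = (∑ j, α j - 1) * ∫ u in μ..b, h u := by
  have hb : 0 < b := hμ.trans hμb
  have hA : 1 < ∑ j, α j := by
    linarith [Finset.single_le_sum (fun j _ => (hα j).le) (Finset.mem_univ i₀)]
  set C := (2 * π)⁻¹ * ∫ s : ℝ, (1 + (s * (b / 2)) ^ 2)⁻¹
  have hbound : ∀ᶠ v : ℝ≥0 in 𝓝[>] 0, ∀ u, ‖smoothedDensity α (fun j => f j - u) v‖ ≤ C := by
    filter_upwards [self_mem_nhdsWithin] with v hv u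
    rw [norm_of_nonneg (smoothedDensity_nonneg _ _ _)]
    exact smoothedDensity_sub_le hα hb hf₀ hf₁ h₀ h₁ u (mem_Ioi.1 hv).ne'
  have hmeas (v : ℝ≥0) := stronglyMeasurable_smoothedDensity_sub (f := f) hα v
  have hlim_ae : ∀ᵐ u, u ∈ uIoc μ b →
      Tendsto (smoothedDensity α fun j => f j - u) (𝓝[>] 0) (𝓝 (h u)) := by
    filter_upwards [Measure.ae_ne volume b] with u hu huI
    rw [uIoc_of_le hμb.le] at huI
    exact hlim u ⟨huI.1, huI.2.lt_of_ne hu⟩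
  have hlim_restrict := (ae_restrict_iff' measurableSet_uIoc).2 hlim_ae
  refine ⟨?_, ?_⟩
  · refine (intervalIntegrable_const (c := C)).mono_fun'
      (aestronglyMeasurable_of_tendsto_ae (𝓝[>] (0 : ℝ≥0))
        (fun v => (hmeas v).aestronglyMeasurable) hlim_restrict) ?_
    filter_upwards [hlim_restrict] with u hu
    exact le_of_tendsto hu.norm (hbound.mono fun v hv => hv u)
  · have hswap := intervalIntegral.tendsto_integral_filter_of_dominated_convergence (fun _ => C)
      (.of_forall fun v => (hmeas v).aestronglyMeasurable)
      (hbound.mono fun v hv => .of_forall fun u _ => hv u) intervalIntegrable_const hlim_ae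
    rw [tendsto_nhds_unique hswap (tendsto_intervalIntegral_smoothedDensity_sub hα hA hfb
      ⟨i₀, hf₀ ▸ hb⟩ ⟨i₀, hf₀ ▸ hμ.ne⟩), mul_inv_cancel_left₀ (sub_pos.2 hA).ne']

end Density

/-! ### Comparison with the Gaussian tail -/

section TailComparison

variable {T T' h : ℝ → ℝ} {μ b : ℝ}

lemma le_integral_of_hasDerivAt_of_tendsto_zero (hμ : μ < b) (hT : ContinuousOn T (Ico μ b))
    (hT' : ∀ u ∈ Ioo μ b, HasDerivAt T (T' u) u) (hlim : Tendsto T (𝓝[<] b) (𝓝 0))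
    (hh : IntervalIntegrable h volume μ b) (hle : ∀ u ∈ Ioo μ b, -T' u ≤ h u) :
    T μ ≤ ∫ u in μ..b, h u := by
  have htruncated (v : ℝ) (hv : v ∈ Ioo μ b) : T μ - T v ≤ ∫ u in μ..v, h u := by
    have hIcc := (intervalIntegrable_iff_integrableOn_Icc_of_le hμ.le).1 hh
    have := intervalIntegral.sub_le_integral_of_hasDeriv_right_of_le hv.1.le
      (hT.mono (Icc_subset_Ico_right hv.2)).fun_neg
      (fun u hu => (hT' u ⟨hu.1, hu.2.trans hv.2⟩).fun_neg.hasDerivWithinAt)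
      (hIcc.mono_set (Icc_subset_Icc_right hv.2.le))
      (fun u hu => hle u ⟨hu.1, hu.2.trans hv.2⟩)
    linarith
  have hprimitive : Tendsto (fun v => ∫ u in μ..v, h u) (𝓝[<] b) (𝓝 (∫ u in μ..b, h u)) := by
    have hcont := intervalIntegral.continuousOn_primitive_interval' hh left_mem_uIcc
    rw [uIcc_of_le hμ.le] at hcont
    refine (hcont b (right_mem_Icc.2 hμ.le)).mono_left ?_
    rw [← nhdsWithin_Ico_eq_nhdsLT hμ]
    exact nhdsWithin_mono b Ico_subset_Icc_self
  have htail : Tendsto (fun v => T μ - T v) (𝓝[<] b) (𝓝 (T μ)) := by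
    simpa only [sub_zero] using hlim.const_sub (T μ)
  refine le_of_tendsto_of_tendsto htail hprimitive ?_
  filter_upwards [Ioo_mem_nhdsLT hμ] with v hv
  exact htruncated v hv

lemma integral_le_of_hasDerivAt_of_tendsto_zero (hμ : μ < b) (hT : ContinuousOn T (Ico μ b))
    (hT' : ∀ u ∈ Ioo μ b, HasDerivAt T (T' u) u) (hlim : Tendsto T (𝓝[<] b) (𝓝 0))
    (hh : IntervalIntegrable h volume μ b) (hle : ∀ u ∈ Ioo μ b, h u ≤ -T' u) :
    ∫ u in μ..b, h u ≤ T μ := by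
  have hneg := le_integral_of_hasDerivAt_of_tendsto_zero hμ hT.fun_neg
    (fun u hu => (hT' u hu).fun_neg) (by simpa only [neg_zero] using hlim.neg) hh.neg
    (fun u hu => neg_le_neg (hle u hu))
  exact neg_le_neg_iff.1 (hneg.trans_eq intervalIntegral.integral_neg)

end TailComparison

/-- The standard Gaussian tail at `√n * √(2 * Kinfstar p u f)`; this is the Gaussian term of the
main theorem for levels `u` above the mean of `f`. -/
def kinfTail {m : ℕ} (n : ℝ) (p f : Fin (m + 1) → ℝ) (u : ℝ) : ℝ :=
  gaussianTail (√n * √(2 * Kinfstar p u f))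

/-- The saddlepoint approximation of the density at `0` of `∑ j, (f j - u) * x j`, where `x` is a
vector of independent Gamma variables with parameters `n • p + Pi.single k 1`. -/
def saddlepoint {ι : Type*} [Fintype ι] (n : ℝ) (p f : ι → ℝ) (k : ι) (u l : ℝ) : ℝ :=
  (2 * π)⁻¹ * ((1 - l * (f k - u))⁻¹ * exp (-(n * kinfDual p f u l))
    * √(2 * π / (n * ∑ j, p j * tilt f u l j ^ 2)))

/-- Minus the derivative of `kinfTail n p f` at `u`, in terms of the dual point `l` of `u`. -/
def kinfTailSlope {ι : Type*} [Fintype ι] (n : ℝ) (p f : ι → ℝ) (u l : ℝ) : ℝ :=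
  gaussianPDFReal 0 1 (√n * √(2 * kinfDual p f u l)) * (√n * (l / √(2 * kinfDual p f u l)))

section Saddlepoint

variable {m : ℕ} {p f : Fin (m + 1) → ℝ} {b n N u l : ℝ} {i₀ i₁ k : Fin (m + 1)}

lemma mul_tilt_sq_le (S : SpansInterval p f b i₀ i₁) (hlt : ∀ j, l * (f j - u) < 1) (hN : 0 ≤ N)
    (h₀ : N ≤ n * p i₀) (h₁ : N ≤ n * p i₁) (j : Fin (m + 1)) :
    N * tilt f u l j ^ 2 ≤ n * ∑ i, p i * tilt f u l i ^ 2 := by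
  have hn : 0 ≤ n := nonneg_of_mul_nonneg_left (hN.trans h₀) (S.pos i₀)
  have hterm (i : Fin (m + 1)) (hi : N ≤ n * p i) (hj : tilt f u l j ^ 2 ≤ tilt f u l i ^ 2) :
      N * tilt f u l j ^ 2 ≤ n * ∑ i, p i * tilt f u l i ^ 2 := calc
    N * tilt f u l j ^ 2 ≤ n * p i * tilt f u l i ^ 2 := by gcongr; exact hN.trans hi
    _ = n * (p i * tilt f u l i ^ 2) := mul_assoc _ _ _
    _ ≤ n * ∑ i, p i * tilt f u l i ^ 2 := by
      gcongr
      exact Finset.single_le_sum (f := fun i => p i * tilt f u l i ^ 2)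
        (fun i _ => mul_nonneg (S.pos i).le (sq_nonneg _)) (Finset.mem_univ i)
  rcases le_total (f j) u with hj | hj
  · exact hterm i₀ h₀ (sq_le_sq.2 (abs_le_abs_of_nonpos
      (div_nonpos_of_nonpos_of_nonneg (sub_nonpos.2 hj) (sub_pos.2 (hlt j)).le)
      (tilt_le_tilt (hlt i₀) (hlt j) (S.apply_left.trans_le (S.mem_Icc j).1))))
  · exact hterm i₁ h₁ (sq_le_sq.2 (abs_le_abs_of_nonneg
      (div_nonneg (sub_nonneg.2 hj) (sub_pos.2 (hlt j)).le)
      (tilt_le_tilt (hlt j) (hlt i₁) ((S.mem_Icc j).2.trans_eq S.apply_right.symm))))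

lemma sum_mul_tilt_sq_pos (S : SpansInterval p f b i₀ i₁) (hu : 0 < u)
    (hlt : ∀ j, l * (f j - u) < 1) : 0 < ∑ j, p j * tilt f u l j ^ 2 := by
  refine Finset.sum_pos' (fun j _ => mul_nonneg (S.pos j).le (sq_nonneg _))
    ⟨i₀, Finset.mem_univ i₀, mul_pos (S.pos i₀) (sq_pos_of_neg ?_)⟩
  refine div_neg_of_neg_of_pos ?_ (sub_pos.2 (hlt i₀))
  rwa [S.apply_left, zero_sub, neg_lt_zero]

lemma prod_one_sub_rpow_neg (hlt : ∀ j, l * (f j - u) < 1) :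
    ∏ j, (1 - l * (f j - u)) ^ (-(n • p + Pi.single k 1 : Fin (m + 1) → ℝ) j)
      = (1 - l * (f k - u))⁻¹ * exp (-(n * kinfDual p f u l)) := by
  have hr (j : Fin (m + 1)) : 0 < 1 - l * (f j - u) := sub_pos.2 (hlt j)
  have hterm (j : Fin (m + 1)) :
      (1 - l * (f j - u)) ^ (-(n • p + Pi.single k 1 : Fin (m + 1) → ℝ) j)
      = exp (-(n * (p j * log (1 - l * (f j - u))))
          - (Pi.single k 1 : Fin (m + 1) → ℝ) j * log (1 - l * (f j - u))) := by
    rw [rpow_def_of_pos (hr j), Pi.add_apply, Pi.smul_apply, smul_eq_mul]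
    ring_nf
  simp only [hterm, ← exp_sum, Finset.sum_sub_distrib, Finset.sum_neg_distrib, ← Finset.mul_sum,
    sum_single_one_mul]
  rw [exp_sub, exp_log (hr k), div_eq_inv_mul, kinfDual]

lemma exists_tendsto_smoothedDensity_sub (S : SpansInterval p f b i₀ i₁) (hN : 4 ≤ N)
    (h₀ : N ≤ n * p i₀) (h₁ : N ≤ n * p i₁) (hu : 0 < u) (h : IsDualPoint p f u l) :
    ∃ d, Tendsto (smoothedDensity (n • p + Pi.single k 1) fun j => f j - u) (𝓝[>] 0) (𝓝 d) ∧
      |d - saddlepoint n p f k u l| ≤ 20 / N * saddlepoint n p f k u l := by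
  have hn : 0 < n := pos_of_mul_pos_left (by linarith) (S.pos i₀).le
  have hβ (j : Fin (m + 1)) : 0 < (n • p) j := mul_pos hn (S.pos j)
  have hsum (x : Fin (m + 1) → ℝ) : ∑ j, (n • p) j * x j = n * ∑ j, p j * x j := by
    simp only [Pi.smul_apply, smul_eq_mul, mul_assoc, Finset.mul_sum]
  obtain ⟨hint, habs⟩ := integrable_modulus_and_abs_integral_sub_le (k := k) (a := tilt f u l)
    (mul_pos hn (sum_mul_tilt_sq_pos S hu h.mul_sub_lt_one)) hN (fun j => (hβ j).le)
    (by rw [hsum, h.sum_mul_tilt, mul_zero]) (hsum _)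
    (mul_tilt_sq_le S h.mul_sub_lt_one (by linarith) h₀ h₁)
  refine ⟨_, tendsto_smoothedDensity
    (fun j => add_pos_of_pos_of_nonneg (hβ j) (single_one_nonneg k j)) h.mul_sub_lt_one hint, ?_⟩
  have hr := sub_pos.2 (h.mul_sub_lt_one k)
  rw [prod_one_sub_rpow_neg h.mul_sub_lt_one, saddlepoint, ← mul_sub, ← mul_sub, abs_mul, abs_mul,
    abs_of_nonneg (by positivity), abs_of_nonneg (by positivity), mul_left_comm (20 / N),
    mul_left_comm (20 / N)]
  gcongr
  exact habs

/-- The saddlepoint approximation is the Gaussian density at `√n * √(2 * kinfDual p f u l)`, up to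
an elementary factor. -/
lemma mul_saddlepoint_eq (hn : 0 < n) (hK : 0 ≤ kinfDual p f u l) :
    n * saddlepoint n p f k u l = gaussianPDFReal 0 1 (√n * √(2 * kinfDual p f u l)) *
      (√n * ((1 - l * (f k - u)) * √(∑ j, p j * tilt f u l j ^ 2))⁻¹) := by
  have hexp : -(√n * √(2 * kinfDual p f u l)) ^ 2 / 2 = -(n * kinfDual p f u l) := by
    rw [mul_pow, sq_sqrt hn.le, sq_sqrt (by positivity)]
    ring
  have hπ : 0 < 2 * π := two_pi_pos
  rw [saddlepoint, gaussianPDFReal_def]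
  simp only [NNReal.coe_one, mul_one, sub_zero, hexp]
  rw [sqrt_div hπ.le, sqrt_mul hn.le]
  calc
    _ = √(2 * π) / (2 * π) * exp (-(n * kinfDual p f u l))
        * (n / √n * ((1 - l * (f k - u))⁻¹ * (√(∑ j, p j * tilt f u l j ^ 2))⁻¹)) := by ring
    _ = _ := by rw [sqrt_div_self, div_sqrt, mul_inv]

lemma hasDerivAt_kinfTail (S : SpansInterval p f b i₀ i₁) (h : IsDualPoint p f u l)
    (hK : 0 < kinfDual p f u l) :
    HasDerivAt (kinfTail n p f) (-kinfTailSlope n p f u l) u := by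
  have hKeq := Kinfstar_eq_kinfDual S.pos S.sum_eq_one h
  have harg := (((hasDerivAt_Kinfstar S h).const_mul 2).sqrt
    (by rw [hKeq]; positivity)).const_mul √n
  refine ((hasDerivAt_gaussianTail _).comp u harg).congr_deriv ?_
  rw [hKeq, mul_div_mul_left _ _ two_ne_zero, neg_mul, kinfTailSlope]

lemma continuousOn_kinfTail (S : SpansInterval p f b i₀ i₁) :
    ContinuousOn (kinfTail n p f) (Ico (∑ j, f j * p j) b) := by
  refine continuous_gaussianTail.comp_continuousOn (continuousOn_const.mul
    (continuous_sqrt.comp_continuousOn (continuousOn_const.mul fun u hu => ?_)))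
  obtain ⟨l, h⟩ := S.exists_isDualPoint hu.1 hu.2
  exact (hasDerivAt_Kinfstar S h).continuousAt.continuousWithinAt

lemma tendsto_kinfTail (S : SpansInterval p f b i₀ i₁) (hn : 0 < n) :
    Tendsto (kinfTail n p f) (𝓝[<] b) (𝓝 0) :=
  tendsto_gaussianTail_atTop.comp <| (tendsto_sqrt_atTop.comp <|
    (tendsto_Kinfstar_atTop S).const_mul_atTop two_pos).const_mul_atTop (sqrt_pos.2 hn)

lemma IsDualPoint.kinfDual_pos (S : SpansInterval p f b i₀ i₁) (hu : 0 < u) (hub : u ≤ b)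
    (hl : 0 < l) (h : IsDualPoint p f u l) : 0 < kinfDual p f u l := by
  have := (S.kinfDual_bounds hu.le hub hl.le h).1
  have hσ := sum_mul_tilt_sq_pos S hu h.mul_sub_lt_one
  have hr := sub_pos.2 (h.mul_sub_lt_one i₁)
  have : 0 < l ^ 2 * (∑ j, p j * tilt f u l j ^ 2) * (1 - l * (f i₁ - u)) := by positivity
  linarith

lemma kinfTailSlope_le_mul_saddlepoint (S : SpansInterval p f b i₀ i₁) (hn : 0 < n) (hu : 0 < u)
    (hub : u ≤ b) (hl : 0 < l) (h : IsDualPoint p f u l) :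
    kinfTailSlope n p f u l ≤ n * saddlepoint n p f i₁ u l := by
  have hK := h.kinfDual_pos S hu hub hl
  have hσ := sum_mul_tilt_sq_pos S hu h.mul_sub_lt_one
  have hr := sub_pos.2 (h.mul_sub_lt_one i₁)
  have hr1 : 1 - l * (f i₁ - u) ≤ 1 := by
    rw [S.apply_right]
    linarith [mul_nonneg hl.le (sub_nonneg.2 hub)]
  rw [kinfTailSlope, mul_saddlepoint_eq hn hK.le]
  gcongr
  · exact gaussianPDFReal_nonneg _ _ _
  rw [← one_div, div_le_div_iff₀ (by positivity) (by positivity), one_mul]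
  refine le_sqrt_of_sq_le ?_
  rw [mul_pow, mul_pow, sq_sqrt hσ.le, mul_left_comm, mul_comm _ (_ * _)]
  refine le_trans ?_ (S.kinfDual_bounds hu.le hub hl.le h).1
  gcongr
  exact pow_le_of_le_one hr.le hr1 two_ne_zero

lemma mul_saddlepoint_le_kinfTailSlope (S : SpansInterval p f b i₀ i₁) (hn : 0 < n) (hu : 0 < u)
    (hub : u ≤ b) (hl : 0 < l) (h : IsDualPoint p f u l) :
    n * saddlepoint n p f i₀ u l ≤ kinfTailSlope n p f u l := by
  have hK := h.kinfDual_pos S hu hub hl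
  have hσ := sum_mul_tilt_sq_pos S hu h.mul_sub_lt_one
  have hr := sub_pos.2 (h.mul_sub_lt_one i₀)
  have hr1 : 1 ≤ 1 - l * (f i₀ - u) := by
    rw [S.apply_left]
    linarith [mul_pos hl hu]
  rw [kinfTailSlope, mul_saddlepoint_eq hn hK.le]
  gcongr
  · exact gaussianPDFReal_nonneg _ _ _
  rw [← one_div, div_le_div_iff₀ (by positivity) (by positivity), one_mul]
  refine sqrt_le_iff.2 ⟨by positivity, (S.kinfDual_bounds hu.le hub hl.le h).2.trans ?_⟩
  rw [mul_pow, mul_pow, sq_sqrt hσ.le, mul_left_comm, mul_comm _ (_ * _)]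
  gcongr
  exact le_self_pow₀ hr1 two_ne_zero

end Saddlepoint

/-! ### Crossing probabilities -/

section Crossing

variable {m : ℕ} {p f : Fin (m + 1) → ℝ} {b n ε μ : ℝ} {i₀ i₁ k : Fin (m + 1)}

lemma smul_add_single_one_pos (hp : ∀ j, 0 < p j) (hn : 0 < n) (j : Fin (m + 1)) :
    0 < (n • p + Pi.single k 1 : Fin (m + 1) → ℝ) j :=
  add_pos_of_pos_of_nonneg (mul_pos hn (hp j)) (single_one_nonneg k j)

lemma sum_smul_add_single_one (n : ℝ) (p : Fin (m + 1) → ℝ) (k : Fin (m + 1)) :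
    ∑ j, (n • p + Pi.single k 1 : Fin (m + 1) → ℝ) j = n * ∑ j, p j + 1 := by
  simp only [Pi.add_apply, Pi.smul_apply, smul_eq_mul, Finset.sum_add_distrib, ← Finset.mul_sum]
  simpa only [mul_one] using congrArg (n * ∑ j, p j + ·) (sum_single_one_mul k fun _ => 1)

lemma exists_density (S : SpansInterval p f b i₀ i₁) (hε : ε ∈ Ioo 0 1)
    (h₀ : 20 / ε ≤ n * p i₀) (h₁ : 20 / ε ≤ n * p i₁) (hμ : ∑ j, f j * p j ≤ μ) (hμb : μ < b) :
    ∃ h l : ℝ → ℝ, IntervalIntegrable h volume μ b ∧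
      (dirichlet m (n • p + Pi.single k 1)).real {w | μ ≤ ∑ j, f j * w j} = n * ∫ u in μ..b, h u ∧
      ∀ u ∈ Ioo μ b, IsDualPoint p f u (l u) ∧ 0 < l u ∧
        |h u - saddlepoint n p f k u (l u)| ≤ ε * saddlepoint n p f k u (l u) := by
  have hN : 20 < 20 / ε := (lt_div_iff₀ hε.1).2 (by linarith [hε.2])
  have hn : 0 < n := pos_of_mul_pos_left (by linarith) (S.pos i₀).le
  have hμ0 : 0 < μ := S.mean_pos.trans_le hμ
  have hpointwise (u : ℝ) (hu : u ∈ Ioo μ b) : ∃ d l : ℝ,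
      Tendsto (smoothedDensity (n • p + Pi.single k 1) fun j => f j - u) (𝓝[>] 0) (𝓝 d) ∧
      IsDualPoint p f u l ∧ 0 < l ∧
      |d - saddlepoint n p f k u l| ≤ ε * saddlepoint n p f k u l := by
    obtain ⟨l, hl⟩ := S.exists_isDualPoint (hμ.trans hu.1.le) hu.2
    obtain ⟨d, hd, habs⟩ := exists_tendsto_smoothedDensity_sub (k := k) S (by linarith) h₀ h₁
      (hμ0.trans hu.1) hl
    rw [div_div_cancel₀ (by norm_num)] at habs
    exact ⟨d, l, hd, hl, hl.pos (fun j => (S.pos j).le) S.sum_eq_one (hμ.trans_lt hu.1), habs⟩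
  choose! h l hlim hdual using hpointwise
  have htwo (i : Fin (m + 1)) (hi : 20 / ε ≤ n * p i) :
      2 ≤ (n • p + Pi.single k 1 : Fin (m + 1) → ℝ) i := by
    have hone := single_one_nonneg k i
    rw [Pi.add_apply, Pi.smul_apply, smul_eq_mul]
    linarith
  obtain ⟨hint, hreal⟩ := dirichlet_real_eq_integral
    (smul_add_single_one_pos S.pos hn) (htwo i₀ h₀)
    (htwo i₁ h₁) (fun j => (S.mem_Icc j).2) S.apply_left S.apply_right hμ0 hμb hlim
  rw [sum_smul_add_single_one, S.sum_eq_one, mul_one, add_sub_cancel_right] at hreal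
  exact ⟨h, l, hint, hreal, hdual⟩

lemma hasDerivAt_mul_kinfTail (S : SpansInterval p f b i₀ i₁) (hμ : ∑ j, f j * p j ≤ μ) {u l : ℝ}
    (hu : u ∈ Ioo μ b) (hl : 0 < l) (h : IsDualPoint p f u l) (c : ℝ) :
    HasDerivAt (fun u => c * kinfTail n p f u) (c * -kinfTailSlope n p f u l) u :=
  (hasDerivAt_kinfTail S h (h.kinfDual_pos S ((S.mean_pos.trans_le hμ).trans hu.1) hu.2.le
    hl)).const_mul c

lemma mul_kinfTail_le_dirichlet (S : SpansInterval p f b i₀ i₁) (hε : ε ∈ Ioo 0 1)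
    (h₀ : 20 / ε ≤ n * p i₀) (h₁ : 20 / ε ≤ n * p i₁) (hμ : ∑ j, f j * p j ≤ μ) (hμb : μ < b) :
    (1 - ε) * kinfTail n p f μ
      ≤ (dirichlet m (n • p + Pi.single i₁ 1)).real {w | μ ≤ ∑ j, f j * w j} := by
  obtain ⟨h, l, hint, hreal, hdual⟩ := exists_density (k := i₁) S hε h₀ h₁ hμ hμb
  have hn : 0 < n := pos_of_mul_pos_left ((div_pos (by norm_num) hε.1).trans_le h₀) (S.pos i₀).le
  rw [hreal, ← intervalIntegral.integral_const_mul]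
  refine le_integral_of_hasDerivAt_of_tendsto_zero (T := fun u => (1 - ε) * kinfTail n p f u) hμb
    (continuousOn_const.mul ((continuousOn_kinfTail S).mono (Ico_subset_Ico_left hμ)))
    (fun u hu => hasDerivAt_mul_kinfTail S hμ hu (hdual u hu).2.1 (hdual u hu).1 _)
    (by simpa only [mul_zero] using (tendsto_kinfTail S hn).const_mul (1 - ε))
    (hint.const_mul n) fun u hu => ?_
  obtain ⟨hl, hl0, habs⟩ := hdual u hu
  calc -((1 - ε) * -kinfTailSlope n p f u (l u)) = (1 - ε) * kinfTailSlope n p f u (l u) := by ring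
    _ ≤ (1 - ε) * (n * saddlepoint n p f i₁ u (l u)) := mul_le_mul_of_nonneg_left
      (kinfTailSlope_le_mul_saddlepoint S hn ((S.mean_pos.trans_le hμ).trans hu.1) hu.2.le hl0 hl)
      (sub_nonneg.2 hε.2.le)
    _ = n * ((1 - ε) * saddlepoint n p f i₁ u (l u)) := mul_left_comm _ _ _
    _ ≤ n * h u := mul_le_mul_of_nonneg_left (by linarith [(abs_le.1 habs).1]) hn.le

lemma dirichlet_le_mul_kinfTail (S : SpansInterval p f b i₀ i₁) (hε : ε ∈ Ioo 0 1)
    (h₀ : 20 / ε ≤ n * p i₀) (h₁ : 20 / ε ≤ n * p i₁) (hμ : ∑ j, f j * p j ≤ μ) (hμb : μ < b) :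
    (dirichlet m (n • p + Pi.single i₀ 1)).real {w | μ ≤ ∑ j, f j * w j}
      ≤ (1 + ε) * kinfTail n p f μ := by
  obtain ⟨h, l, hint, hreal, hdual⟩ := exists_density (k := i₀) S hε h₀ h₁ hμ hμb
  have hn : 0 < n := pos_of_mul_pos_left ((div_pos (by norm_num) hε.1).trans_le h₀) (S.pos i₀).le
  rw [hreal, ← intervalIntegral.integral_const_mul]
  refine integral_le_of_hasDerivAt_of_tendsto_zero (T := fun u => (1 + ε) * kinfTail n p f u) hμb
    (continuousOn_const.mul ((continuousOn_kinfTail S).mono (Ico_subset_Ico_left hμ)))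
    (fun u hu => hasDerivAt_mul_kinfTail S hμ hu (hdual u hu).2.1 (hdual u hu).1 _)
    (by simpa only [mul_zero] using (tendsto_kinfTail S hn).const_mul (1 + ε))
    (hint.const_mul n) fun u hu => ?_
  obtain ⟨hl, hl0, habs⟩ := hdual u hu
  calc n * h u ≤ n * ((1 + ε) * saddlepoint n p f i₀ u (l u)) :=
      mul_le_mul_of_nonneg_left (by linarith [(abs_le.1 habs).2]) hn.le
    _ = (1 + ε) * (n * saddlepoint n p f i₀ u (l u)) := mul_left_comm _ _ _
    _ ≤ (1 + ε) * kinfTailSlope n p f u (l u) := mul_le_mul_of_nonneg_left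
      (mul_saddlepoint_le_kinfTailSlope S hn ((S.mean_pos.trans_le hμ).trans hu.1) hu.2.le hl0 hl)
      (by linarith [hε.1])
    _ = -((1 + ε) * -kinfTailSlope n p f u (l u)) := by ring

end Crossing

/-! ### Levels below the mean -/

section Reflection

variable {m : ℕ} {p f : Fin (m + 1) → ℝ} {b n ε μ : ℝ} {i₀ i₁ : Fin (m + 1)}

lemma SpansInterval.reflect {ι : Type*} [Fintype ι] {p f : ι → ℝ} {i₀ i₁ : ι}
    (S : SpansInterval p f b i₀ i₁) : SpansInterval p (fun j => b - f j) b i₁ i₀ where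
  pos := S.pos
  sum_eq_one := S.sum_eq_one
  right_pos := S.right_pos
  mem_Icc j := ⟨sub_nonneg.2 (S.mem_Icc j).2, sub_le_self b (S.mem_Icc j).1⟩
  apply_left := sub_eq_zero.2 S.apply_right.symm
  apply_right := by rw [S.apply_left, sub_zero]

lemma sum_const_sub_mul {ι : Type*} [Fintype ι] {q : ι → ℝ} (hq : ∑ j, q j = 1) (f : ι → ℝ)
    (b : ℝ) : ∑ j, (b - f j) * q j = b - ∑ j, f j * q j := by
  simp only [sub_mul, Finset.sum_sub_distrib, ← Finset.mul_sum, hq, mul_one]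

lemma Kinfstar_const_sub (p f : Fin (m + 1) → ℝ) (b μ : ℝ) :
    Kinfstar p (b - μ) (fun j => b - f j) = Kinfstar p μ f := by
  refine congrArg sInf (Set.ext fun x => exists_congr fun q => and_congr_right fun hq => ?_)
  rw [sum_const_sub_mul hq.2, sub_right_inj]

lemma ae_sum_eq_one_and_sum_mul_ne_dirichlet {α : Fin (m + 1) → ℝ} (hα : ∀ j, 0 < α j)
    (hf : ∃ i, f i ≠ μ) : ∀ᵐ w ∂dirichlet m α, ∑ j, w j = 1 ∧ ∑ j, f j * w j ≠ μ := by
  obtain ⟨i, hi⟩ := hf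
  have hmeas : MeasurableSet {w : Fin (m + 1) → ℝ | ∑ j, w j = 1 ∧ ∑ j, f j * w j ≠ μ} :=
    (measurableSet_eq_fun (by fun_prop) (by fun_prop)).inter
      (measurableSet_eq_fun (by fun_prop) (by fun_prop)).compl
  rw [← map_piGamma_eq_dirichlet hα, ae_map_iff (by fun_prop) hmeas]
  filter_upwards [ae_sum_pos_piGamma hα, ae_sum_mul_ne_zero_piGamma (c := fun j => f j - μ) hα
    fun h => hi (sub_eq_zero.1 (congrFun h i))] with x hx hne
  simp only [Pi.smul_apply, smul_eq_mul, ← Finset.mul_sum, mul_left_comm (f _)]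
  refine ⟨inv_mul_cancel₀ hx.ne', fun h => hne ?_⟩
  rw [inv_mul_eq_iff_eq_mul₀ hx.ne'] at h
  simp only [mul_comm (x _), sum_sub_const_mul, h]
  ring

lemma dirichlet_real_const_sub {α : Fin (m + 1) → ℝ} (hα : ∀ j, 0 < α j) (hf : ∃ i, f i ≠ μ)
    (b : ℝ) : (dirichlet m α).real {w | b - μ ≤ ∑ j, (b - f j) * w j}
      = 1 - (dirichlet m α).real {w | μ ≤ ∑ j, f j * w j} := by
  have := isProbabilityMeasure_dirichlet hα
  rw [← probReal_compl_eq_one_sub (measurableSet_le (by fun_prop) (by fun_prop))]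
  refine measureReal_congr ?_
  filter_upwards [ae_sum_eq_one_and_sum_mul_ne_dirichlet hα hf] with w ⟨hw, hne⟩
  refine propext ?_
  change b - μ ≤ ∑ j, (b - f j) * w j ↔ ¬ μ ≤ ∑ j, f j * w j
  rw [sum_const_sub_mul hw, sub_le_sub_iff_left, not_le]
  exact ⟨fun h => h.lt_of_ne hne, le_of_lt⟩

lemma gaussianTail_Afun_of_mean_le (hp : ∀ j, 0 < p j) (hp1 : ∑ j, p j = 1)
    (h : ∑ j, f j * p j ≤ μ) : gaussianTail (√n * Afun p μ f) = kinfTail n p f μ := by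
  rcases h.eq_or_lt with h | h
  · rw [Afun, kinfTail, ← h, Kinfstar_mean hp hp1, mul_zero, sqrt_zero, mul_zero]
  · rw [Afun, kinfTail, sign_of_pos (sub_pos.2 h), one_mul]

lemma gaussianTail_Afun_of_lt_mean (h : μ < ∑ j, f j * p j) (b : ℝ) :
    gaussianTail (√n * Afun p μ f) = 1 - kinfTail n p (fun j => b - f j) (b - μ) := by
  rw [Afun, kinfTail, Kinfstar_const_sub, sign_of_neg (sub_neg.2 h), neg_one_mul, mul_neg,
    gaussianTail_neg]

lemma kinfTail_le_half (n : ℝ) (p f : Fin (m + 1) → ℝ) (u : ℝ) : kinfTail n p f u ≤ 1 / 2 :=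
  gaussianTail_zero ▸ antitone_gaussianTail (by positivity)

lemma mul_gaussianTail_Afun_le_dirichlet (S : SpansInterval p f b i₀ i₁) (hε : ε ∈ Ioo 0 1)
    (h₀ : 20 / ε ≤ n * p i₀) (h₁ : 20 / ε ≤ n * p i₁) (hμ : μ ∈ Ioo 0 b) :
    (1 - ε) * gaussianTail (√n * Afun p μ f)
      ≤ (dirichlet m (n • p + Pi.single i₁ 1)).real {w | μ ≤ ∑ j, f j * w j} := by
  rcases le_or_gt (∑ j, f j * p j) μ with h | h
  · rw [gaussianTail_Afun_of_mean_le S.pos S.sum_eq_one h]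
    exact mul_kinfTail_le_dirichlet S hε h₀ h₁ h hμ.2
  · have hn : 0 < n := pos_of_mul_pos_left ((div_pos (by norm_num) hε.1).trans_le h₀) (S.pos i₀).le
    have hreflect := dirichlet_le_mul_kinfTail (μ := b - μ) S.reflect hε h₁ h₀
      (by rw [sum_const_sub_mul S.sum_eq_one]; linarith) (sub_lt_self b hμ.1)
    rw [dirichlet_real_const_sub (smul_add_single_one_pos S.pos hn)
      ⟨i₀, S.apply_left.trans_ne hμ.1.ne⟩] at hreflect
    rw [gaussianTail_Afun_of_lt_mean h b]
    nlinarith [kinfTail_le_half n p (fun j => b - f j) (b - μ), hε.1]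

lemma dirichlet_le_mul_gaussianTail_Afun (S : SpansInterval p f b i₀ i₁) (hε : ε ∈ Ioo 0 1)
    (h₀ : 20 / ε ≤ n * p i₀) (h₁ : 20 / ε ≤ n * p i₁) (hμ : μ ∈ Ioo 0 b) :
    (dirichlet m (n • p + Pi.single i₀ 1)).real {w | μ ≤ ∑ j, f j * w j}
      ≤ (1 + ε) * gaussianTail (√n * Afun p μ f) := by
  rcases le_or_gt (∑ j, f j * p j) μ with h | h
  · rw [gaussianTail_Afun_of_mean_le S.pos S.sum_eq_one h]
    exact dirichlet_le_mul_kinfTail S hε h₀ h₁ h hμ.2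
  · have hn : 0 < n := pos_of_mul_pos_left ((div_pos (by norm_num) hε.1).trans_le h₀) (S.pos i₀).le
    have hreflect := mul_kinfTail_le_dirichlet (μ := b - μ) S.reflect hε h₁ h₀
      (by rw [sum_const_sub_mul S.sum_eq_one]; linarith) (sub_lt_self b hμ.1)
    rw [dirichlet_real_const_sub (smul_add_single_one_pos S.pos hn)
      ⟨i₀, S.apply_left.trans_ne hμ.1.ne⟩] at hreflect
    rw [gaussianTail_Afun_of_lt_mean h b]
    nlinarith [kinfTail_le_half n p (fun j => b - f j) (b - μ), hε.1]

end Reflection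

/-! ### Removing one unit from a Dirichlet parameter -/

section ShiftedMean

variable {m : ℕ} {α f : Fin (m + 1) → ℝ} {b : ℝ} {i₀ i₁ k : Fin (m + 1)}

/-- The normalisation of the parameter `α` after one unit is removed from the index `k`. The
vectors `p̄⁺` and `p̄⁻` are `shiftedMean α (Fin.last m)` and `shiftedMean α 0`. -/
def shiftedMean (α : Fin (m + 1) → ℝ) (k ℓ : Fin (m + 1)) : ℝ :=
  (if ℓ = k then α ℓ - 1 else α ℓ) / ((∑ j, α j) - 1)

lemma one_lt_sum (hα : ∀ j, 0 < α j) (hk : 1 < α k) : 1 < ∑ j, α j :=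
  hk.trans_le (Finset.single_le_sum (fun j _ => (hα j).le) (Finset.mem_univ k))

lemma mul_shiftedMean (h : 1 < ∑ j, α j) (k ℓ : Fin (m + 1)) :
    (∑ j, α j - 1) * shiftedMean α k ℓ = if ℓ = k then α ℓ - 1 else α ℓ :=
  mul_div_cancel₀ _ (sub_pos.2 h).ne'

lemma smul_shiftedMean_add_single_one (h : 1 < ∑ j, α j) (k : Fin (m + 1)) :
    (∑ j, α j - 1) • shiftedMean α k + Pi.single k 1 = α := by
  ext ℓ
  rw [Pi.add_apply, Pi.smul_apply, smul_eq_mul, mul_shiftedMean h, Pi.single_apply]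
  split_ifs <;> ring

lemma sub_one_le_mul_shiftedMean (h : 1 < ∑ j, α j) (k ℓ : Fin (m + 1)) :
    α ℓ - 1 ≤ (∑ j, α j - 1) * shiftedMean α k ℓ := by
  rw [mul_shiftedMean h]
  split_ifs <;> linarith

lemma shiftedMean_pos (hα : ∀ j, 0 < α j) (hk : 1 < α k) (ℓ : Fin (m + 1)) :
    0 < shiftedMean α k ℓ := by
  refine div_pos ?_ (sub_pos.2 (one_lt_sum hα hk))
  split_ifs with hℓ
  · exact hℓ ▸ sub_pos.2 hk
  · exact hα ℓ

lemma sum_shiftedMean (h : 1 < ∑ j, α j) (k : Fin (m + 1)) : ∑ ℓ, shiftedMean α k ℓ = 1 := by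
  have hsum := sum_smul_add_single_one (∑ j, α j - 1) (shiftedMean α k) k
  rw [smul_shiftedMean_add_single_one h] at hsum
  exact mul_left_cancel₀ (sub_pos.2 h).ne' (by linarith)

lemma spansInterval_shiftedMean (hα : ∀ j, 0 < α j) (hk : 1 < α k) (hb : 0 < b)
    (hf : ∀ j, f j ∈ Icc 0 b) (h₀ : f i₀ = 0) (h₁ : f i₁ = b) :
    SpansInterval (shiftedMean α k) f b i₀ i₁ :=
  ⟨shiftedMean_pos hα hk, sum_shiftedMean (one_lt_sum hα hk) k, hb, hf, h₀, h₁⟩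

end ShiftedMean

lemma twenty_div_le_c0_div_sq {ε : ℝ} (hε : ε ∈ Ioo 0 1) : 20 / ε ≤ c0 / ε ^ 2 := by
  have hc0 : 20 ≤ c0 :=
    calc (20 : ℝ) ≤ 2 / 4 * 8 ^ 2 := by norm_num
      _ ≤ c0 := by
        unfold c0
        gcongr
        · exact pi_le_four
        · exact le_add_of_nonneg_right (by positivity)
  exact div_le_div₀ (by linarith) hc0 (pow_pos hε.1 2)
    (pow_le_of_le_one hε.1.le hε.2.le two_ne_zero)

lemma ofReal_mul_gaussianReal {c : ℝ} (hc : 0 ≤ c) (x : ℝ) :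
    ENNReal.ofReal c * gaussianReal 0 1 {y | x ≤ y} = ENNReal.ofReal (c * gaussianTail x) := by
  rw [ENNReal.ofReal_mul hc, gaussianTail, ofReal_measureReal]
  rfl

end DirichletCrossing

open DirichletCrossing in
theorem dirichlet_crossing_two_sided_general {m : ℕ} {b : ℝ} {f α : Fin (m + 1) → ℝ}
    {i₀ i₁ : Fin (m + 1)} {ε μ : ℝ} (hf : ∀ i, f i ∈ Icc 0 b) (hf₀ : f i₀ = 0) (hf₁ : f i₁ = b)
    (hα : ∀ i, 0 < α i) (hε : ε ∈ Ioo 0 1) (h₀ : 20 / ε + 1 ≤ α i₀) (h₁ : 20 / ε + 1 ≤ α i₁)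
    (hμ : μ ∈ Ioo 0 b) :
    ENNReal.ofReal (1 - ε) *
        gaussianReal 0 1 {x | √((∑ j, α j) - 1) * Afun (shiftedMean α i₁) μ f ≤ x}
      ≤ dirichlet m α {w | μ ≤ ∑ ℓ, f ℓ * w ℓ} ∧
    dirichlet m α {w | μ ≤ ∑ ℓ, f ℓ * w ℓ}
      ≤ ENNReal.ofReal (1 + ε) *
        gaussianReal 0 1 {x | √((∑ j, α j) - 1) * Afun (shiftedMean α i₀) μ f ≤ x} := by
  have := isProbabilityMeasure_dirichlet hα
  have hlarge : 0 < 20 / ε := div_pos (by norm_num) hε.1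
  have hsum : 1 < ∑ j, α j := one_lt_sum hα (by linarith : 1 < α i₀)
  have hspans (k : Fin (m + 1)) (hk : 20 / ε + 1 ≤ α k) :
      SpansInterval (shiftedMean α k) f b i₀ i₁ :=
    spansInterval_shiftedMean hα (by linarith) (hμ.1.trans hμ.2) hf hf₀ hf₁
  have hmass (k i : Fin (m + 1)) (hi : 20 / ε + 1 ≤ α i) :
      20 / ε ≤ (∑ j, α j - 1) * shiftedMean α k i :=
    (le_sub_iff_add_le.2 hi).trans (sub_one_le_mul_shiftedMean hsum k i)
  have hlower := mul_gaussianTail_Afun_le_dirichlet (hspans i₁ h₁) hε (hmass i₁ i₀ h₀)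
    (hmass i₁ i₁ h₁) hμ
  have hupper := dirichlet_le_mul_gaussianTail_Afun (hspans i₀ h₀) hε (hmass i₀ i₀ h₀)
    (hmass i₀ i₁ h₁) hμ
  rw [smul_shiftedMean_add_single_one hsum] at hlower hupper
  rw [ofReal_mul_gaussianReal (sub_nonneg.2 hε.2.le), ofReal_mul_gaussianReal (by linarith [hε.1]),
    ← ofReal_measureReal (measure_ne_top _ _)]
  exact ⟨ENNReal.ofReal_le_ofReal hlower, ENNReal.ofReal_le_ofReal hupper⟩

/-- **Two-sided Gaussian-type bound for a Dirichlet weighted sum** (Corollary 2). -/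
theorem dirichlet_crossing_two_sided
    (m : ℕ) (hm : 1 ≤ m) (b : ℝ) (hb : 0 < b)
    (f : Fin (m + 1) → ℝ) (hf : ∀ i, f i ∈ Set.Icc (0 : ℝ) b)
    (hf0 : f 0 = 0) (hfm : f (Fin.last m) = b)
    (α : Fin (m + 1) → ℝ) (hα : ∀ i, 0 < α i)
    (ε : ℝ) (hε : ε ∈ Set.Ioo (0 : ℝ) 1)
    (hmin : c0 / ε ^ 2 + 1 ≤ min (α 0) (α (Fin.last m)))
    (μ : ℝ) (hμ : μ ∈ Set.Ioo (0 : ℝ) b) :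
    ENNReal.ofReal (1 - ε) *
        gaussianReal 0 1
          {x | Real.sqrt ((∑ j, α j) - 1) *
              Afun (fun ℓ => (if ℓ = Fin.last m then α ℓ - 1 else α ℓ) / ((∑ j, α j) - 1)) μ f
            ≤ x}
      ≤ dirichlet m α {w | μ ≤ ∑ ℓ, f ℓ * w ℓ} ∧
    dirichlet m α {w | μ ≤ ∑ ℓ, f ℓ * w ℓ}
      ≤ ENNReal.ofReal (1 + ε) *
        gaussianReal 0 1
          {x | Real.sqrt ((∑ j, α j) - 1) *
              Afun (fun ℓ => (if ℓ = 0 then α ℓ - 1 else α ℓ) / ((∑ j, α j) - 1)) μ f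
            ≤ x} := by
  have hlarge := (add_le_add_left (DirichletCrossing.twenty_div_le_c0_div_sq hε) 1).trans hmin
  exact dirichlet_crossing_two_sided_general hf hf0 hfm hα hε (hlarge.trans (min_le_left _ _))
    (hlarge.trans (min_le_right _ _)) hμ

end
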